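/- arXiv:1812.09498 — 2 statements merged into one kernel-verified Lean document; each statement's English description precedes it below -/
import Mathlib

section
/- Let (ũ, x̃) be a scheme pair. Then x̃'(v) ≠ 0 for every v ∈ [ũ(c), u_b]; consequently x̃ is a strictly increasing bijection from [ũ(c), u_b] onto [c, b], and its inverse function x̃⁻¹ : [c,b] → [ũ(c), u_b] exists and is continuously differentiable on [c,b]. -/
open Set Filter

noncomputable section

/-- Partial derivative of a two-argument function with respect to its first argument. -/
def pd1 (f : ℝ → ℝ → ℝ) (u x : ℝ) : ℝ := deriv (fun t => f t x) u

/-- Partial derivative of a two-argument function with respect to its second argument. -/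
def pd2 (f : ℝ → ℝ → ℝ) (u x : ℝ) : ℝ := deriv (fun s => f u s) x

/-- The nonlinearity `𝒩(u,x) = N(u,x)·u`. -/
def Ncal (N : ℝ → ℝ → ℝ) (u x : ℝ) : ℝ := N u x * u

/-- `u` is twice continuously differentiable on `s`, with first derivative `u'`
and second derivative `u''` (derivatives within `s`). -/
def IsC2On (u u' u'' : ℝ → ℝ) (s : Set ℝ) : Prop :=
  (∀ x ∈ s, HasDerivWithinAt u (u' x) s x) ∧
  (∀ x ∈ s, HasDerivWithinAt u' (u'' x) s x) ∧
  ContinuousOn u'' s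

/-- The straight boundary value problem: `u ∈ C²([a,b])`, `u'' = 𝒩(u(x),x)` on `[a,b]`,
`u(a) = 0`, `u(b) = ub`. -/
def IsStraightBVP (N : ℝ → ℝ → ℝ) (a b ub : ℝ) (u u' u'' : ℝ → ℝ) : Prop :=
  IsC2On u u' u'' (Icc a b) ∧
  (∀ x ∈ Icc a b, u'' x = Ncal N (u x) x) ∧
  u a = 0 ∧ u b = ub

/-- Hypothesis (H): `N`, `∂N/∂x`, `∂N/∂u`, `∂²N/∂x∂u`, `∂²N/∂u²` are all
nonnegative for `u ≥ 0` and `x ∈ [a,b]`. -/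
def HypH (N : ℝ → ℝ → ℝ) (a b : ℝ) : Prop :=
  ∀ u : ℝ, 0 ≤ u → ∀ x ∈ Icc a b,
    0 ≤ N u x ∧ 0 ≤ pd2 N u x ∧ 0 ≤ pd1 N u x ∧
    0 ≤ pd2 (pd1 N) u x ∧ 0 ≤ pd1 (pd1 N) u x

/-- A mesh: finitely many strictly increasing points `pt 0 < pt 1 < ⋯ < pt n`. -/
structure Mesh where
  n : ℕ
  pt : ℕ → ℝ
  npos : 0 < n
  mono : ∀ i < n, pt i < pt (i + 1)

/-- The coefficient `α_i(p,q,x)` of the straight discretized equation,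
where `xi` is the mesh point `x_i`. -/
def alphaC (N : ℝ → ℝ → ℝ) (xi p q x : ℝ) : ℝ :=
  (pd1 N q xi * p + pd2 N q xi) * (x - xi) + N q xi

/-- The coefficient `β_i(p,q,v)` of the inverse discretized equation,
where `ui` is the (shifted) mesh point `ū_i`. -/
def betaC (N : ℝ → ℝ → ℝ) (ui p q v : ℝ) : ℝ :=
  -(pd1 (Ncal N) ui q + pd2 (Ncal N) ui q * p) * (v - ui) - Ncal N ui q

/-- Shifted mesh knots `ū_i = max(u_i, s)`. -/
def ubar (m : Mesh) (s : ℝ) (i : ℕ) : ℝ := max (m.pt i) s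

/-- A straight scheme solution on `[a,c]` with respect to the mesh `m`:
`ũ ∈ C¹([a,c])` and on each mesh subinterval `[x_i, x_{i+1}]` the second
derivative of `ũ` equals `α_i(ũ'(x_i), ũ(x_i), x)·ũ(x)`. -/
def IsStraightSol (N : ℝ → ℝ → ℝ) (a c : ℝ) (m : Mesh) (u u' : ℝ → ℝ) : Prop :=
  (∀ x ∈ Icc a c, HasDerivWithinAt u (u' x) (Icc a c) x) ∧
  ContinuousOn u' (Icc a c) ∧
  ∀ i < m.n, ∀ x ∈ Icc (m.pt i) (m.pt (i + 1)),
    HasDerivWithinAt u'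
      (alphaC N (m.pt i) (u' (m.pt i)) (u (m.pt i)) x * u x)
      (Icc (m.pt i) (m.pt (i + 1))) x

/-- An inverse scheme solution on `[s, ub]` with respect to the mesh `m` (shifted by `s`):
`x̃ ∈ C¹([s,ub])` and on each subinterval `[ū_i, ū_{i+1}]` the second derivative of `x̃`
equals `β_i(x̃'(ū_i), x̃(ū_i), v)·(x̃'(v))³`. -/
def IsInvSol (N : ℝ → ℝ → ℝ) (ub : ℝ) (m : Mesh) (s : ℝ) (X X' : ℝ → ℝ) : Prop :=
  (∀ v ∈ Icc s ub, HasDerivWithinAt X (X' v) (Icc s ub) v) ∧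
  ContinuousOn X' (Icc s ub) ∧
  ∀ i < m.n, ∀ v ∈ Icc (ubar m s i) (ubar m s (i + 1)),
    HasDerivWithinAt X'
      (betaC N (ubar m s i) (X' (ubar m s i)) (X (ubar m s i)) v * (X' v) ^ 3)
      (Icc (ubar m s i) (ubar m s (i + 1))) v

/-- A scheme pair `(ũ, x̃)`. -/
def IsSchemePair (N : ℝ → ℝ → ℝ) (a b c ub : ℝ) (ms mi : Mesh)
    (u u' X X' : ℝ → ℝ) : Prop :=
  IsStraightSol N a c ms u u' ∧ u a = 0 ∧ 0 < u c ∧ u c < ub ∧ u' c ≠ 0 ∧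
  IsInvSol N ub mi (u c) X X' ∧ X ub = b ∧ X (u c) = c ∧ X' (u c) = 1 / u' c

/-- A scheme pair additionally satisfying the sign inequalities
`0 < ũ < u_b`, `ũ' > 0`, `ũ'' ≥ 0` on `(a,c]`, and `c < x̃`, `x̃' > 0`, `x̃'' ≤ 0`
on `(ũ(c), u_b]` (second derivatives taken on the mesh subintervals). -/
def GoodPair (N : ℝ → ℝ → ℝ) (a b c ub : ℝ) (ms mi : Mesh)
    (u u' X X' : ℝ → ℝ) : Prop :=
  IsSchemePair N a b c ub ms mi u u' X X' ∧
  (∀ x ∈ Ioc a c, 0 < u x ∧ u x < ub ∧ 0 < u' x) ∧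
  (∀ i < ms.n, ∀ x ∈ Icc (ms.pt i) (ms.pt (i + 1)), x ∈ Ioc a c →
    0 ≤ alphaC N (ms.pt i) (u' (ms.pt i)) (u (ms.pt i)) x * u x) ∧
  (∀ v ∈ Ioc (u c) ub, c < X v ∧ 0 < X' v) ∧
  (∀ i < mi.n, ∀ v ∈ Icc (ubar mi (u c) i) (ubar mi (u c) (i + 1)), v ∈ Ioc (u c) ub →
    betaC N (ubar mi (u c) i) (X' (ubar mi (u c) i)) (X (ubar mi (u c) i)) v * (X' v) ^ 3 ≤ 0)

/-- All steps of the straight mesh `ms` and of the (shifted) inverse mesh `mi`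
are of size at most `h`. -/
def StepLe (ms mi : Mesh) (s h : ℝ) : Prop :=
  (∀ i < ms.n, ms.pt (i + 1) - ms.pt i ≤ h) ∧
  (∀ i < mi.n, ubar mi s (i + 1) - ubar mi s i ≤ h)

/-!
On each mesh interval the inverse equation `x̃'' = β (x̃')³` reads `x̃'' = (β (x̃')²) x̃'`, a linear
equation for `x̃'` with continuous coefficient. By Grönwall's inequality, run backwards, a zero of
`x̃'` propagates to the left end of its mesh interval and hence down to `ũ(c)`, where
`x̃' = 1 / ũ'(c) ≠ 0`. So `x̃'` has no zero, by Darboux's theorem it has constant sign, and the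
sign is positive because `x̃(ũ(c)) = c < b = x̃(u_b)`. The inverse of `x̃` is continuous by
compactness, and therefore `C¹` with derivative `1 / (x̃' ∘ x̃⁻¹)`.
-/

section LinearODE

variable {E : Type*} [NormedAddCommGroup E] [NormedSpace ℝ E] {f : ℝ → E} {a b : ℝ}

theorem eq_zero_of_norm_deriv_le_mul_norm_of_eq_zero_left {f' : ℝ → E} {K : ℝ}
    (hf : ContinuousOn f (Icc a b)) (hf' : ∀ x ∈ Ioc a b, HasDerivWithinAt f (f' x) (Iic x) x)
    (hb : f b = 0) (bound : ∀ x ∈ Ioc a b, ‖f' x‖ ≤ K * ‖f x‖) :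
    ∀ x ∈ Icc a b, f x = 0 := by
  have hneg : ∀ x ∈ Icc (-b) (-a), f (-x) = 0 := by
    refine eq_zero_of_abs_deriv_le_mul_abs_self_of_eq_zero_right (f := fun x => f (-x))
      (f' := fun x => -f' (-x)) (K := K) (hf.comp continuousOn_neg fun _ => neg_mem_Icc_iff.2)
      (fun x hx => ?_) (by rwa [neg_neg])
      fun x hx => by simpa only [norm_neg] using bound _ (neg_mem_Ioc_iff.2 hx)
    have hmaps : MapsTo Neg.neg (Ici x) (Iic (-x)) := fun _ hy => neg_le_neg (mem_Ici.1 hy)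
    simpa only [Function.comp_def, neg_one_smul] using
      (hf' _ (neg_mem_Ioc_iff.2 hx)).scomp x (hasDerivAt_neg x).hasDerivWithinAt hmaps
  intro x hx
  simpa only [neg_neg] using hneg (-x) (neg_mem_Icc_iff.2 (by rwa [neg_neg, neg_neg]))

theorem ne_zero_of_hasDerivWithinAt_smul {g : ℝ → ℝ} (hg : ContinuousOn g (Icc a b))
    (hf : ∀ x ∈ Icc a b, HasDerivWithinAt f (g x • f x) (Icc a b) x) (ha : f a ≠ 0) :
    ∀ x ∈ Icc a b, f x ≠ 0 := by
  intro x hx hfx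
  obtain ⟨K, hK⟩ := isCompact_Icc.exists_bound_of_continuousOn hg
  have hsub : Icc a x ⊆ Icc a b := Icc_subset_Icc_right hx.2
  refine ha (eq_zero_of_norm_deriv_le_mul_norm_of_eq_zero_left
    (f' := fun y => g y • f y) (K := K)
    (fun y hy => ((hf y (hsub hy)).mono hsub).continuousWithinAt) (fun y hy => ?_) hfx
    (fun y hy => ?_) a (left_mem_Icc.2 hx.1))
  · exact (hf y (hsub (Ioc_subset_Icc_self hy))).mono_of_mem_nhdsWithin
      (mem_of_superset (Icc_mem_nhdsLE hy.1) (Icc_subset_Icc_right (hy.2.trans hx.2)))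
  · rw [norm_smul]
    gcongr
    exact hK y (hsub (Ioc_subset_Icc_self hy))

end LinearODE

theorem forall_mem_Icc_of_forall_Icc_succ {α : Type*} [LinearOrder α] {t : ℕ → α} {n : ℕ}
    {P : α → Prop} (ht : ∀ i < n, t i ≤ t (i + 1)) (h0 : P (t 0))
    (hP : ∀ i < n, P (t i) → ∀ x ∈ Icc (t i) (t (i + 1)), P x) :
    ∀ x ∈ Icc (t 0) (t n), P x := by
  have hknot : ∀ i ≤ n, P (t i) := fun i hi => by
    induction i with
    | zero => exact h0
    | succ i ih => exact hP i hi (ih (Nat.le_of_succ_le hi)) _ (right_mem_Icc.2 (ht i hi))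
  suffices ∀ i ≤ n, ∀ x ∈ Icc (t 0) (t i), P x from this n le_rfl
  intro i hi x hx
  induction i with
  | zero => exact le_antisymm hx.1 hx.2 ▸ h0
  | succ i ih =>
    rcases le_total x (t i) with hxi | hxi
    · exact ih (Nat.le_of_succ_le hi) ⟨hx.1, hxi⟩
    · exact hP i hi (hknot i (Nat.le_of_succ_le hi)) x ⟨hxi, hx.2⟩

theorem ne_zero_of_hasDerivWithinAt_mul_pow_succ {f : ℝ → ℝ} {t : ℕ → ℝ} {n k : ℕ}
    {β : ℕ → ℝ → ℝ} (ht : ∀ i < n, t i ≤ t (i + 1))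
    (hβ : ∀ i < n, ContinuousOn (β i) (Icc (t i) (t (i + 1))))
    (hf : ∀ i < n, ∀ x ∈ Icc (t i) (t (i + 1)),
      HasDerivWithinAt f (β i x * f x ^ (k + 1)) (Icc (t i) (t (i + 1))) x)
    (h0 : f (t 0) ≠ 0) : ∀ x ∈ Icc (t 0) (t n), f x ≠ 0 := by
  refine forall_mem_Icc_of_forall_Icc_succ ht h0 fun i hi => ?_
  have hcont : ContinuousOn f (Icc (t i) (t (i + 1))) :=
    fun x hx => (hf i hi x hx).continuousWithinAt
  refine ne_zero_of_hasDerivWithinAt_smul ((hβ i hi).mul (hcont.pow k)) fun x hx => ?_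
  simpa only [Pi.mul_apply, Pi.pow_apply, smul_eq_mul, mul_assoc, ← pow_succ] using hf i hi x hx

theorem strictMonoOn_of_hasDerivWithinAt_ne_zero_of_lt {D : Set ℝ} (hD : Convex ℝ D)
    {f f' : ℝ → ℝ} (hf : ∀ x ∈ D, HasDerivWithinAt f (f' x) D x) (hne : ∀ x ∈ D, f' x ≠ 0) {x y : ℝ}
    (hx : x ∈ D) (hy : y ∈ D) (hxy : x < y) (hlt : f x < f y) : StrictMonoOn f D := by
  have hcont : ContinuousOn f D := fun z hz => (hf z hz).continuousWithinAt
  have hint : ∀ z ∈ interior D, HasDerivWithinAt f (f' z) (interior D) z := fun z hz =>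
    (hf z (interior_subset hz)).mono interior_subset
  rcases hasDerivWithinAt_forall_lt_or_forall_gt_of_forall_ne hD hf hne with hneg | hpos
  · have hanti : StrictAntiOn f D := strictAntiOn_of_hasDerivWithinAt_neg hD hcont hint
      fun z hz => hneg z (interior_subset hz)
    exact absurd (hanti hx hy hxy) hlt.asymm
  · exact strictMonoOn_of_hasDerivWithinAt_pos hD hcont hint
      fun z hz => hpos z (interior_subset hz)

section Inverse

theorem continuousOn_image_of_isCompact_of_leftInvOn {α β : Type*} [TopologicalSpace α]
    [TopologicalSpace β] [T2Space β] {f : α → β} {g : β → α} {K : Set α} (hK : IsCompact K)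
    (hf : ContinuousOn f K) (hg : LeftInvOn g f K) : ContinuousOn g (f '' K) := by
  refine continuousOn_iff_isClosed.2 fun t ht => ⟨f '' (t ∩ K), ?_, ?_⟩
  · exact ((hK.inter_left ht).image_of_continuousOn (hf.mono inter_subset_right)).isClosed
  · rw [hg.image_inter', inter_assoc, inter_self]

variable {𝕜 : Type*} [NontriviallyNormedField 𝕜] {f : 𝕜 → 𝕜} {s : Set 𝕜}

theorem hasDerivWithinAt_image_of_leftInvOn {g : 𝕜 → 𝕜} {f' x : 𝕜} (hgf : LeftInvOn g f s)
    (hx : x ∈ s) (hg : ContinuousWithinAt g (f '' s) (f x)) (hf : HasDerivWithinAt f f' s x)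
    (hf' : f' ≠ 0) : HasDerivWithinAt g f'⁻¹ (f '' s) (f x) := by
  have hmaps : MapsTo g (f '' s) s := hgf.mapsTo (surjOn_image f s)
  rw [← hgf hx] at hf
  exact HasFDerivWithinAt.of_local_left_inverse
    (f' := ContinuousLinearEquiv.unitsEquivAut 𝕜 (Units.mk0 f' hf'))
    (hg.tendsto_nhdsWithin hmaps) hf (mem_image_of_mem f hx)
    (eventually_mem_nhdsWithin.mono hgf.rightInvOn_image)

theorem exists_invOn_hasDerivWithinAt_of_isCompact {f' : 𝕜 → 𝕜} (hs : IsCompact s)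
    (hf : ∀ x ∈ s, HasDerivWithinAt f (f' x) s x) (hf' : ContinuousOn f' s)
    (hne : ∀ x ∈ s, f' x ≠ 0) (hinj : InjOn f s) :
    ∃ g g' : 𝕜 → 𝕜, InvOn g f s (f '' s) ∧
      (∀ y ∈ f '' s, HasDerivWithinAt g (g' y) (f '' s) y) ∧ ContinuousOn g' (f '' s) := by
  obtain ⟨g, hg⟩ : ∃ g, LeftInvOn g f s := ⟨_, hinj.leftInvOn_invFunOn⟩
  have hmaps : MapsTo g (f '' s) s := hg.mapsTo (surjOn_image f s)
  have hcont : ContinuousOn g (f '' s) := continuousOn_image_of_isCompact_of_leftInvOn hs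
    (fun x hx => (hf x hx).continuousWithinAt) hg
  refine ⟨g, fun y => (f' (g y))⁻¹, ⟨hg, hg.rightInvOn_image⟩, ?_,
    (hf'.comp hcont hmaps).inv₀ fun y hy => hne _ (hmaps hy)⟩
  rintro _ ⟨x, hx, rfl⟩
  simp only [hg hx]
  exact hasDerivWithinAt_image_of_leftInvOn hg hx (hcont _ (mem_image_of_mem f hx)) (hf x hx)
    (hne x hx)

end Inverse

theorem ubar_zero_of_le {m : Mesh} {s : ℝ} (h0 : m.pt 0 ≤ s) : ubar m s 0 = s :=
  max_eq_right h0

theorem ubar_le_ubar_succ (m : Mesh) (s : ℝ) {i : ℕ} (hi : i < m.n) :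
    ubar m s i ≤ ubar m s (i + 1) :=
  max_le_max_right s (m.mono i hi).le

theorem continuous_betaC (N : ℝ → ℝ → ℝ) (ui p q : ℝ) : Continuous (betaC N ui p q) := by
  unfold betaC
  fun_prop

theorem scheme_pair_inverse_exists_general {m : Mesh} {s ub c b : ℝ} {β : ℕ → ℝ → ℝ}
    {X X' : ℝ → ℝ} (hX : ∀ v ∈ Icc s ub, HasDerivWithinAt X (X' v) (Icc s ub) v)
    (hX' : ContinuousOn X' (Icc s ub))
    (hβ : ∀ i < m.n, ContinuousOn (β i) (Icc (ubar m s i) (ubar m s (i + 1))))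
    (hX'' : ∀ i < m.n, ∀ v ∈ Icc (ubar m s i) (ubar m s (i + 1)),
      HasDerivWithinAt X' (β i v * X' v ^ 3) (Icc (ubar m s i) (ubar m s (i + 1))) v)
    (h0 : m.pt 0 ≤ s) (hn : ub ≤ m.pt m.n) (hsub : s < ub) (hcb : c < b)
    (hXs : X s = c) (hXub : X ub = b) (hX's : X' s ≠ 0) :
    (∀ v ∈ Icc s ub, X' v ≠ 0) ∧
    StrictMonoOn X (Icc s ub) ∧
    X '' Icc s ub = Icc c b ∧
    ∃ Y Y' : ℝ → ℝ,
      (∀ v ∈ Icc s ub, Y (X v) = v) ∧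
      (∀ w ∈ Icc c b, X (Y w) = w) ∧
      (∀ w ∈ Icc c b, HasDerivWithinAt Y (Y' w) (Icc c b) w) ∧
      ContinuousOn Y' (Icc c b) := by
  have hknots : Icc s ub ⊆ Icc (ubar m s 0) (ubar m s m.n) :=
    Icc_subset_Icc (ubar_zero_of_le h0).le (hn.trans (le_max_left _ _))
  have hne : ∀ v ∈ Icc s ub, X' v ≠ 0 := fun v hv =>
    ne_zero_of_hasDerivWithinAt_mul_pow_succ (fun _ => ubar_le_ubar_succ m s) hβ hX''
      (by rwa [ubar_zero_of_le h0]) v (hknots hv)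
  have hmono : StrictMonoOn X (Icc s ub) := strictMonoOn_of_hasDerivWithinAt_ne_zero_of_lt
    (convex_Icc s ub) hX hne (left_mem_Icc.2 hsub.le) (right_mem_Icc.2 hsub.le) hsub
    (by rwa [hXs, hXub])
  have himage : X '' Icc s ub = Icc c b := by
    rw [ContinuousOn.image_Icc_of_monotoneOn hsub.le (fun v hv => (hX v hv).continuousWithinAt)
      hmono.monotoneOn, hXs, hXub]
  obtain ⟨Y, Y', hinv, hY, hY'⟩ :=
    exists_invOn_hasDerivWithinAt_of_isCompact isCompact_Icc hX hX' hne hmono.injOn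
  rw [himage] at hinv hY hY'
  exact ⟨hne, hmono, himage, Y, Y', hinv.1, hinv.2, hY, hY'⟩

/-- for a scheme pair `(ũ, x̃)`, the derivative `x̃'` never vanishes on
`[ũ(c), u_b]`; consequently `x̃` is a strictly increasing bijection from `[ũ(c), u_b]`
onto `[c,b]` whose inverse is continuously differentiable on `[c,b]`. -/
theorem scheme_pair_inverse_exists
    (a b c ub : ℝ) (hab : a < b) (hub : 0 < ub) (hc : c ∈ Ioo a b)
    (N : ℝ → ℝ → ℝ) (hN : ContDiff ℝ 2 (Function.uncurry N))
    (ms mi : Mesh) (hms0 : ms.pt 0 = a) (hmsn : ms.pt ms.n = c)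
    (hmi0 : mi.pt 0 = 0) (hmin : mi.pt mi.n = ub)
    (u u' X X' : ℝ → ℝ)
    (hp : IsSchemePair N a b c ub ms mi u u' X X') :
    (∀ v ∈ Icc (u c) ub, X' v ≠ 0) ∧
    StrictMonoOn X (Icc (u c) ub) ∧
    X '' Icc (u c) ub = Icc c b ∧
    ∃ Y Y' : ℝ → ℝ,
      (∀ v ∈ Icc (u c) ub, Y (X v) = v) ∧
      (∀ w ∈ Icc c b, X (Y w) = w) ∧
      (∀ w ∈ Icc c b, HasDerivWithinAt Y (Y' w) (Icc c b) w) ∧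
      ContinuousOn Y' (Icc c b) := by
  obtain ⟨-, -, hs, hsub, hu', ⟨hX, hX', hX''⟩, hXub, hXs, hX's⟩ := hp
  exact scheme_pair_inverse_exists_general hX hX' (fun _ _ => (continuous_betaC ..).continuousOn)
    hX'' (hmi0.trans_le hs.le) hmin.ge hsub hc.2 hXs hXub (hX's ▸ one_div_ne_zero hu')
end
end

section
/- Assume hypothesis (H). Then for every c ∈ (a,b), every straight mesh on [a,c] and every inverse mesh on [0,u_b], there exists a scheme pair (ũ, x̃) which in addition satisfies: 0 < ũ(x) < u_b, ũ'(x) > 0 and ũ''(x) ≥ 0 for all x ∈ (a,c] (second derivatives taken on the mesh subintervals), and c < x̃(v), x̃'(v) > 0 and x̃''(v) ≤ 0 for all v ∈ (ũ(c), u_b], with x̃(v) < b for v ∈ (ũ(c), u_b). -/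
/-!
The pair is found by shooting in the slope `k = ũ'(a)`. On each cell the straight equation is
linear with a nonnegative coefficient, so for `k > 0` its solution `u_k` is convex and increasing
with `k (x - a) ≤ u_k(x) ≤ u_k'(x) (x - a)`. In terms of the reciprocal slope `q = 1 / x̃'` the
inverse equation on a cell reads `(q²)' = 2 (A r + C)`, where `r` is the distance from the left
knot and `A, C ≥ 0`; hence `q` is the square root of a quadratic polynomial, and the inverse
solution started from `(u_k(c), c, 1 / u_k'(c))` is increasing, concave and continuous in `k`.

As `k → 0`, `p = u_k'(c)` tends to `0` and `u_k(c) = O(p)`, so that `q ≤ p + R r` on the first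
cell for some constant `R`, and `∫ dr / (p + R r)` diverges like `log (1 / p)`: the inverse
solution ends beyond `b`. For `k = u_b / (c - a)` we have `u_k(c) ≥ u_b`, all shifted cells are
degenerate, and the inverse solution ends where it starts, at `c < b`. By the intermediate value
theorem some `k` in between makes it end at `b`, and `u_k(c) < u_b` for this `k`, since otherwise
it would end at `c`.
-/

open Set Filter

noncomputable section

section Cells

variable {t : ℕ → ℝ} {n : ℕ}

lemma exists_mem_Icc_succ (hn : 0 < n) {x : ℝ} (hx : x ∈ Icc (t 0) (t n)) :
    ∃ i < n, x ∈ Icc (t i) (t (i + 1)) := by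
  induction n, hn using Nat.le_induction with
  | base => exact ⟨0, one_pos, hx⟩
  | succ n _ ih =>
    rcases le_total x (t n) with h | h
    · obtain ⟨i, hi, hxi⟩ := ih ⟨hx.1, h⟩
      exact ⟨i, hi.trans n.lt_succ_self, hxi⟩
    · exact ⟨n, n.lt_succ_self, h, hx.2⟩

lemma Icc_zero_succ_eq_union (ht : MonotoneOn t (Iic (n + 1))) :
    Icc (t 0) (t (n + 1)) = Icc (t 0) (t n) ∪ Icc (t n) (t (n + 1)) :=
  (Icc_union_Icc_eq_Icc (ht (by simp) (by simp) n.zero_le) (ht (by simp) (by simp) n.le_succ)).symm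

lemma Icc_succ_subset_Icc (ht : MonotoneOn t (Iic n)) {i : ℕ} (hi : i < n) :
    Icc (t i) (t (i + 1)) ⊆ Icc (t 0) (t n) :=
  Icc_subset_Icc (ht (by simp) hi.le i.zero_le) (ht hi self_mem_Iic hi)

lemma exists_eqOn_Icc_succ {E : Type*} (ht : MonotoneOn t (Iic n)) {f : ℕ → ℝ → E} {z : ℕ → E}
    (hleft : ∀ i, f i (t i) = z i) (hright : ∀ i, f i (t (i + 1)) = z (i + 1)) :
    ∃ y : ℝ → E, (∀ i ≤ n, y (t i) = z i) ∧ ∀ i < n, EqOn y (f i) (Icc (t i) (t (i + 1))) := by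
  induction n with
  | zero => exact ⟨fun _ => z 0, by simp, by simp⟩
  | succ n ih =>
    obtain ⟨y, hyz, hyf⟩ := ih (ht.mono (Iic_subset_Iic.2 n.le_succ))
    have hold : EqOn (fun x => if x ≤ t n then y x else f n x) y (Iic (t n)) :=
      fun x hx => if_pos hx
    have hnew : EqOn (fun x => if x ≤ t n then y x else f n x) (f n) (Ici (t n)) := by
      intro x hx
      rcases (mem_Ici.1 hx).eq_or_lt with rfl | hlt
      · rw [hold self_mem_Iic, hyz n le_rfl, hleft]
      · exact if_neg hlt.not_ge
    refine ⟨fun x => if x ≤ t n then y x else f n x, fun i hi => ?_, fun i hi => ?_⟩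
    · rcases Nat.le_succ_iff.1 hi with hi' | rfl
      · exact (hold (ht hi n.le_succ hi')).trans (hyz i hi')
      · exact (hnew (ht n.le_succ self_mem_Iic n.le_succ)).trans (hright n)
    · rcases Nat.lt_succ_iff_lt_or_eq.1 hi with hi' | rfl
      · exact fun x hx => (hold (hx.2.trans (ht hi n.le_succ hi'))).trans (hyf i hi' hx)
      · exact hnew.mono Icc_subset_Ici_self

lemma continuousOn_Icc_of_Icc_succ {E : Type*} [TopologicalSpace E] {f : ℝ → E}
    (ht : MonotoneOn t (Iic n)) (hf : ∀ i < n, ContinuousOn f (Icc (t i) (t (i + 1)))) :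
    ContinuousOn f (Icc (t 0) (t n)) := by
  induction n with
  | zero => simp
  | succ n ih =>
    rw [Icc_zero_succ_eq_union ht]
    exact (ih (ht.mono (Iic_subset_Iic.2 n.le_succ))
      fun i hi => hf i (hi.trans n.lt_succ_self)).union_of_isClosed (hf n n.lt_succ_self)
      isClosed_Icc isClosed_Icc

lemma monotoneOn_Icc_of_Icc_succ {f : ℝ → ℝ} (ht : MonotoneOn t (Iic n))
    (hf : ∀ i < n, MonotoneOn f (Icc (t i) (t (i + 1)))) : MonotoneOn f (Icc (t 0) (t n)) := by
  induction n with
  | zero => simp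
  | succ n ih =>
    rw [Icc_zero_succ_eq_union ht]
    exact (ih (ht.mono (Iic_subset_Iic.2 n.le_succ))
      fun i hi => hf i (hi.trans n.lt_succ_self)).union_right (hf n n.lt_succ_self)
      (isGreatest_Icc (ht (by simp) (by simp) n.zero_le))
      (isLeast_Icc (ht (by simp) (by simp) n.le_succ))

variable {E : Type*} [NormedAddCommGroup E] [NormedSpace ℝ E]

lemma hasDerivWithinAt_union_of_isClosed {f : ℝ → E} {f' : E} {s₁ s₂ : Set ℝ}
    (hs₁ : IsClosed s₁) (hs₂ : IsClosed s₂) {x : ℝ} (h₁ : x ∈ s₁ → HasDerivWithinAt f f' s₁ x)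
    (h₂ : x ∈ s₂ → HasDerivWithinAt f f' s₂ x) : HasDerivWithinAt f f' (s₁ ∪ s₂) x := by
  have extend {s : Set ℝ} (hs : IsClosed s) (h : x ∈ s → HasDerivWithinAt f f' s x) :
      HasDerivWithinAt f f' s x := by
    by_cases hx : x ∈ s
    · exact h hx
    · exact hasDerivWithinAt_iff_hasFDerivWithinAt.2
        (.of_notMem_closure (hs.closure_eq.symm ▸ hx))
  exact (extend hs₁ h₁).union (extend hs₂ h₂)

lemma hasDerivWithinAt_Icc_of_Icc_succ {f f' : ℝ → E} (ht : MonotoneOn t (Iic n))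
    (hf : ∀ i < n, ∀ x ∈ Icc (t i) (t (i + 1)),
      HasDerivWithinAt f (f' x) (Icc (t i) (t (i + 1))) x) :
    ∀ x ∈ Icc (t 0) (t n), HasDerivWithinAt f (f' x) (Icc (t 0) (t n)) x := by
  induction n with
  | zero =>
    intro x _
    rw [Icc_self]
    exact hasDerivWithinAt_iff_hasFDerivWithinAt.2 (.of_finite (finite_singleton _))
  | succ n ih =>
    intro x _
    rw [Icc_zero_succ_eq_union ht]
    exact hasDerivWithinAt_union_of_isClosed isClosed_Icc isClosed_Icc
      (ih (ht.mono (Iic_subset_Iic.2 n.le_succ)) (fun i hi => hf i (hi.trans n.lt_succ_self)) x)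
      (hf n n.lt_succ_self x)

lemma exists_hasDerivWithinAt_of_forall_Icc_succ {f : ℕ → E → ℝ → E → E}
    (ht : MonotoneOn t (Iic n))
    (hf : ∀ i < n, ∀ z, ∃ y : ℝ → E, y (t i) = z ∧ ∀ x ∈ Icc (t i) (t (i + 1)),
      HasDerivWithinAt y (f i z x (y x)) (Icc (t i) (t (i + 1))) x) (z₀ : E) :
    ∃ y : ℝ → E, y (t 0) = z₀ ∧ ∀ i < n, ∀ x ∈ Icc (t i) (t (i + 1)),
      HasDerivWithinAt y (f i (y (t i)) x (y x)) (Icc (t i) (t (i + 1))) x := by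
  have hflow (i : ℕ) (z : E) : ∃ y : ℝ → E, y (t i) = z ∧ (i < n → ∀ x ∈ Icc (t i) (t (i + 1)),
      HasDerivWithinAt y (f i z x (y x)) (Icc (t i) (t (i + 1))) x) := by
    by_cases hi : i < n
    · exact (hf i hi z).imp fun y hy => ⟨hy.1, fun _ => hy.2⟩
    · exact ⟨fun _ => z, rfl, fun h => absurd h hi⟩
  choose Φ hΦ hΦ' using hflow
  let z : ℕ → E := fun i => Nat.rec z₀ (fun i w => Φ i w (t (i + 1))) i
  obtain ⟨y, hyz, hy⟩ := exists_eqOn_Icc_succ ht (z := z) (fun i => hΦ i (z i)) (fun _ => rfl)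
  refine ⟨y, hyz 0 n.zero_le, fun i hi x hx => ?_⟩
  rw [hyz i hi.le, hy i hi hx]
  exact (hΦ' i (z i) hi x hx).congr_of_mem (hy i hi) hx

end Cells

section LipschitzODE

open scoped NNReal

variable {E : Type*} [NormedAddCommGroup E] [NormedSpace ℝ E] [CompleteSpace E]
  {f : ℝ → E → E} {K : ℝ≥0} {p q : ℝ}

lemma exists_hasDerivWithinAt_of_lipschitzWith_of_mul_le_one (hpq : p ≤ q)
    (hlen : (K + 1) * (q - p) ≤ 1) (hlip : ∀ t ∈ Icc p q, LipschitzWith K (f t))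
    (hcont : ∀ y, ContinuousOn (f · y) (Icc p q)) (y₀ : E) :
    ∃ y : ℝ → E, y p = y₀ ∧ ∀ t ∈ Icc p q, HasDerivWithinAt y (f t (y t)) (Icc p q) t := by
  obtain ⟨B, hB⟩ := isCompact_Icc.exists_bound_of_continuousOn (hcont y₀)
  lift B to ℝ≥0 using (norm_nonneg _).trans (hB p ⟨le_rfl, hpq⟩)
  have hPL : IsPicardLindelof f (⟨p, le_rfl, hpq⟩ : Icc p q) y₀ B 0 (B + K * B) K :=
    { lipschitzOnWith := fun t ht => (hlip t ht).lipschitzOnWith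
      continuousOn := fun y _ => hcont y
      norm_le := fun t ht y hy => by
        have hy' : ‖y - y₀‖ ≤ B := by simpa [dist_eq_norm] using hy
        calc ‖f t y‖ ≤ ‖f t y₀‖ + ‖f t y - f t y₀‖ := norm_le_norm_add_norm_sub' _ _
          _ ≤ B + K * ‖y - y₀‖ := add_le_add (hB t ht) ((hlip t ht).norm_sub_le y y₀)
          _ ≤ (B + K * B : ℝ≥0) := by push_cast; gcongr
      mul_max_le := by
        rw [sub_self, max_eq_left (sub_nonneg.2 hpq), NNReal.coe_zero, sub_zero]
        push_cast
        calc (B + K * B) * (q - p) = (B : ℝ) * ((K + 1) * (q - p)) := by ring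
          _ ≤ B := mul_le_of_le_one_right B.2 hlen }
  exact hPL.exists_eq_forall_mem_Icc_hasDerivWithinAt₀

lemma exists_hasDerivWithinAt_of_lipschitzWith (hpq : p ≤ q)
    (hlip : ∀ t ∈ Icc p q, LipschitzWith K (f t))
    (hcont : ∀ y, ContinuousOn (f · y) (Icc p q)) (y₀ : E) :
    ∃ y : ℝ → E, y p = y₀ ∧ ∀ t ∈ Icc p q, HasDerivWithinAt y (f t (y t)) (Icc p q) t := by
  obtain ⟨n, hn⟩ := exists_nat_gt ((K + 1) * (q - p))
  have hn₀ : (0 : ℝ) < n :=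
    (mul_nonneg (by positivity) (sub_nonneg.2 hpq)).trans_lt hn
  let t : ℕ → ℝ := fun i => p + i * ((q - p) / n)
  have ht₀ : t 0 = p := by simp [t]
  have htn : t n = q := by simp only [t]; field_simp; ring
  have hmono : Monotone t := fun i j hij => by
    have := div_nonneg (sub_nonneg.2 hpq) hn₀.le
    simp only [t]
    gcongr
  have hlen (i : ℕ) : (K + 1) * (t (i + 1) - t i) ≤ 1 := by
    have hstep : t (i + 1) - t i = (q - p) / n := by simp only [t]; push_cast; ring
    rw [hstep, ← mul_div_assoc, div_le_one hn₀]
    exact hn.le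
  have hsub {i : ℕ} (hi : i < n) : Icc (t i) (t (i + 1)) ⊆ Icc p q := by
    simpa only [ht₀, htn] using Icc_succ_subset_Icc (hmono.monotoneOn _) hi
  obtain ⟨y, hy₀, hy⟩ := exists_hasDerivWithinAt_of_forall_Icc_succ (f := fun _ _ => f)
    (hmono.monotoneOn _) (fun i hi => exists_hasDerivWithinAt_of_lipschitzWith_of_mul_le_one
      (hmono i.le_succ) (hlen i) (fun s hs => hlip s (hsub hi hs))
      fun x => (hcont x).mono (hsub hi)) y₀
  have hy' := hasDerivWithinAt_Icc_of_Icc_succ (hmono.monotoneOn _) hy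
  rw [ht₀, htn] at hy'
  exact ⟨y, ht₀ ▸ hy₀, hy'⟩

lemma exists_hasDerivWithinAt_second_order_linear {R : Type*} [NormedRing R] [NormedAlgebra ℝ R]
    [CompleteSpace R] {a : ℝ → R} (hpq : p ≤ q) (ha : ContinuousOn a (Icc p q)) (y₀ : R × R) :
    ∃ y : ℝ → R × R, y p = y₀ ∧
      ∀ x ∈ Icc p q, HasDerivWithinAt y ((y x).2, a x * (y x).1) (Icc p q) x := by
  obtain ⟨M, hM⟩ := isCompact_Icc.exists_bound_of_continuousOn ha
  lift M to ℝ≥0 using (norm_nonneg _).trans (hM p ⟨le_rfl, hpq⟩)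
  refine exists_hasDerivWithinAt_of_lipschitzWith (K := max 1 M) (f := fun x y => (y.2, a x * y.1))
    hpq (fun x hx => LipschitzWith.prodMk LipschitzWith.prod_snd (.of_dist_le_mul fun y z => ?_))
    (fun y => by fun_prop) y₀
  calc dist (a x * y.1) (a x * z.1) = ‖a x * (y - z).1‖ := by
        rw [dist_eq_norm, ← mul_sub, Prod.fst_sub]
    _ ≤ ‖a x‖ * ‖(y - z).1‖ := norm_mul_le _ _
    _ ≤ M * ‖y - z‖ := mul_le_mul (hM x hx) (norm_fst_le _) (norm_nonneg _) M.2
    _ = M * dist y z := by rw [dist_eq_norm]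

lemma eqOn_zero_of_second_order_linear {R : Type*} [NormedRing R] [NormedAlgebra ℝ R]
    {a : ℝ → R} {y : ℝ → R × R} (ha : ContinuousOn a (Icc p q))
    (hy : ∀ x ∈ Icc p q, HasDerivWithinAt y ((y x).2, a x * (y x).1) (Icc p q) x)
    (hp : y p = 0) : EqOn y 0 (Icc p q) := by
  obtain ⟨M, hM⟩ := isCompact_Icc.exists_bound_of_continuousOn ha
  refine eq_zero_of_abs_deriv_le_mul_abs_self_of_eq_zero_right (K := max 1 M)
    (HasDerivWithinAt.continuousOn hy)
    (fun x hx => (hy x (Ico_subset_Icc_self hx)).mono_of_mem_nhdsWithin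
      (Icc_mem_nhdsGE_of_mem hx)) hp fun x hx => norm_prod_le_iff.2 ⟨?_, ?_⟩
  · exact (norm_snd_le _).trans (le_mul_of_one_le_left (norm_nonneg _) (le_max_left 1 M))
  · calc ‖a x * (y x).1‖ ≤ ‖a x‖ * ‖(y x).1‖ := norm_mul_le _ _
      _ ≤ max 1 M * ‖y x‖ := mul_le_mul
        ((hM x (Ico_subset_Icc_self hx)).trans (le_max_right 1 M)) (norm_fst_le _)
        (norm_nonneg _) (zero_le_one.trans (le_max_left 1 M))

end LipschitzODE

section PartialDerivatives

variable {N : ℝ → ℝ → ℝ}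

lemma hasDerivAt_fderiv_uncurry_fst (hN : Differentiable ℝ (Function.uncurry N)) (u x : ℝ) :
    HasDerivAt (fun t => N t x) (fderiv ℝ (Function.uncurry N) (u, x) (1, 0)) u :=
  (hN (u, x)).hasFDerivAt.comp_hasDerivAt (f := (·, x)) u
    ((hasDerivAt_id' u).prodMk (hasDerivAt_const u x))

lemma hasDerivAt_fderiv_uncurry_snd (hN : Differentiable ℝ (Function.uncurry N)) (u x : ℝ) :
    HasDerivAt (N u) (fderiv ℝ (Function.uncurry N) (u, x) (0, 1)) x :=
  (hN (u, x)).hasFDerivAt.comp_hasDerivAt x ((hasDerivAt_const x u).prodMk (hasDerivAt_id' x))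

lemma continuous_pd1 (hN : ContDiff ℝ 1 (Function.uncurry N)) :
    Continuous (Function.uncurry (pd1 N)) := by
  have h : Function.uncurry (pd1 N) = fun z => fderiv ℝ (Function.uncurry N) z (1, 0) :=
    funext fun z => (hasDerivAt_fderiv_uncurry_fst (hN.differentiable one_ne_zero) z.1 z.2).deriv
  rw [h]
  exact (hN.continuous_fderiv one_ne_zero).clm_apply continuous_const

lemma continuous_pd2 (hN : ContDiff ℝ 1 (Function.uncurry N)) :
    Continuous (Function.uncurry (pd2 N)) := by
  have h : Function.uncurry (pd2 N) = fun z => fderiv ℝ (Function.uncurry N) z (0, 1) :=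
    funext fun z => (hasDerivAt_fderiv_uncurry_snd (hN.differentiable one_ne_zero) z.1 z.2).deriv
  rw [h]
  exact (hN.continuous_fderiv one_ne_zero).clm_apply continuous_const

lemma contDiff_uncurry_Ncal {n : WithTop ℕ∞} (hN : ContDiff ℝ n (Function.uncurry N)) :
    ContDiff ℝ n (Function.uncurry (Ncal N)) :=
  hN.mul contDiff_fst

lemma pd1_Ncal (hN : Differentiable ℝ (Function.uncurry N)) (u x : ℝ) :
    pd1 (Ncal N) u x = pd1 N u x * u + N u x := by
  have h := (hasDerivAt_fderiv_uncurry_fst hN u x).differentiableAt.hasDerivAt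
  exact (h.mul (hasDerivAt_id' u)).deriv.trans (by rw [mul_one, pd1])

lemma pd2_Ncal (hN : Differentiable ℝ (Function.uncurry N)) (u x : ℝ) :
    pd2 (Ncal N) u x = pd2 N u x * u :=
  ((hasDerivAt_fderiv_uncurry_snd hN u x).differentiableAt.hasDerivAt.mul_const u).deriv

end PartialDerivatives

/-- The part of hypothesis (H) that concerns `N` and its first partial derivatives. -/
structure FirstOrderHypH (N : ℝ → ℝ → ℝ) (a b : ℝ) : Prop where
  nonneg : ∀ u, 0 ≤ u → ∀ x ∈ Icc a b, 0 ≤ N u x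
  pd1_nonneg : ∀ u, 0 ≤ u → ∀ x ∈ Icc a b, 0 ≤ pd1 N u x
  pd2_nonneg : ∀ u, 0 ≤ u → ∀ x ∈ Icc a b, 0 ≤ pd2 N u x

lemma FirstOrderHypH.mono {N : ℝ → ℝ → ℝ} {a b a' b' : ℝ} (hH : FirstOrderHypH N a b)
    (hsub : Icc a' b' ⊆ Icc a b) : FirstOrderHypH N a' b' :=
  ⟨fun u hu x hx => hH.nonneg u hu x (hsub hx), fun u hu x hx => hH.pd1_nonneg u hu x (hsub hx),
    fun u hu x hx => hH.pd2_nonneg u hu x (hsub hx)⟩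

lemma HypH.firstOrderHypH {N : ℝ → ℝ → ℝ} {a b : ℝ} (hH : HypH N a b) : FirstOrderHypH N a b :=
  ⟨fun u hu x hx => (hH u hu x hx).1, fun u hu x hx => (hH u hu x hx).2.2.1,
    fun u hu x hx => (hH u hu x hx).2.1⟩

namespace Mesh

variable (m : Mesh) (s : ℝ)

lemma monotoneOn_pt : MonotoneOn m.pt (Iic m.n) :=
  monotoneOn_of_le_succ ordConnected_Iic fun i _ _ hi => (m.mono i (Nat.lt_of_succ_le hi)).le

lemma pt_mem_Icc {i : ℕ} (hi : i ≤ m.n) : m.pt i ∈ Icc (m.pt 0) (m.pt m.n) :=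
  ⟨m.monotoneOn_pt (by simp) hi i.zero_le, m.monotoneOn_pt hi self_mem_Iic hi⟩

lemma pt_zero_lt_pt_n : m.pt 0 < m.pt m.n :=
  (m.mono 0 m.npos).trans_le (m.monotoneOn_pt m.npos self_mem_Iic m.npos)

lemma monotoneOn_ubar : MonotoneOn (ubar m s) (Iic m.n) :=
  fun _ hi _ hj hij => max_le_max_right s (m.monotoneOn_pt hi hj hij)

end Mesh

section ConvexSolutions

variable {u v α : ℝ → ℝ} {p q : ℝ}

lemma monotoneOn_Icc_of_hasDerivWithinAt_nonneg
    (hu : ∀ x ∈ Icc p q, HasDerivWithinAt u (v x) (Icc p q) x) (hv : ∀ x ∈ Icc p q, 0 ≤ v x) :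
    MonotoneOn u (Icc p q) :=
  monotoneOn_of_hasDerivWithinAt_nonneg (convex_Icc p q) (HasDerivWithinAt.continuousOn hu)
    (fun x hx => (hu x (interior_subset hx)).mono interior_subset)
    (fun x hx => hv x (interior_subset hx))

-- First `u v`, then `v ^ 2` is monotone, so `v` cannot vanish.
lemma pos_of_hasDerivWithinAt_mul (hu : ∀ x ∈ Icc p q, HasDerivWithinAt u (v x) (Icc p q) x)
    (hv : ∀ x ∈ Icc p q, HasDerivWithinAt v (α x * u x) (Icc p q) x)
    (hα : ∀ x ∈ Icc p q, 0 ≤ α x) (hu₀ : 0 ≤ u p) (hv₀ : 0 < v p) :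
    ∀ x ∈ Icc p q, 0 < v x := by
  intro x hx
  have hp : p ∈ Icc p q := ⟨le_rfl, hx.1.trans hx.2⟩
  have huv_mono : MonotoneOn (u * v) (Icc p q) :=
    monotoneOn_Icc_of_hasDerivWithinAt_nonneg (fun y hy => (hu y hy).mul (hv y hy)) fun y hy => by
      have := mul_nonneg (hα y hy) (mul_self_nonneg (u y))
      linarith [mul_self_nonneg (v y)]
  have huv (y) (hy : y ∈ Icc p q) : 0 ≤ u y * v y :=
    (mul_nonneg hu₀ hv₀.le).trans (huv_mono hp hy hy.1)
  have hvv_mono : MonotoneOn (v * v) (Icc p q) :=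
    monotoneOn_Icc_of_hasDerivWithinAt_nonneg (fun y hy => (hv y hy).mul (hv y hy)) fun y hy => by
      linarith [mul_nonneg (hα y hy) (huv y hy)]
  have hv_ne (y) (hy : y ∈ Icc p q) : v y ≠ 0 :=
    mul_self_pos.1 ((mul_pos hv₀ hv₀).trans_le (hvv_mono hp hy hy.1))
  by_contra! hvx
  obtain ⟨y, hy, hvy⟩ := intermediate_value_Icc' hx.1
    ((HasDerivWithinAt.continuousOn hv).mono (Icc_subset_Icc_right hx.2)) ⟨hvx, hv₀.le⟩
  exact hv_ne y (Icc_subset_Icc_right hx.2 hy) hvy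

lemma monotoneOn_of_hasDerivWithinAt_mul
    (hu : ∀ x ∈ Icc p q, HasDerivWithinAt u (v x) (Icc p q) x)
    (hv : ∀ x ∈ Icc p q, HasDerivWithinAt v (α x * u x) (Icc p q) x)
    (hα : ∀ x ∈ Icc p q, 0 ≤ α x) (hu₀ : 0 ≤ u p) (hv₀ : 0 < v p) :
    MonotoneOn u (Icc p q) ∧ MonotoneOn v (Icc p q) := by
  have humono : MonotoneOn u (Icc p q) := monotoneOn_Icc_of_hasDerivWithinAt_nonneg hu
    fun x hx => (pos_of_hasDerivWithinAt_mul hu hv hα hu₀ hv₀ x hx).le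
  exact ⟨humono, monotoneOn_Icc_of_hasDerivWithinAt_nonneg hv fun x hx =>
    mul_nonneg (hα x hx) (hu₀.trans (humono ⟨le_rfl, hx.1.trans hx.2⟩ hx hx.1))⟩

lemma sub_mem_Icc_of_hasDerivWithinAt_of_monotoneOn (hpq : p ≤ q)
    (hu : ∀ x ∈ Icc p q, HasDerivWithinAt u (v x) (Icc p q) x) (hv : MonotoneOn v (Icc p q)) :
    u q - u p ∈ Icc (v p * (q - p)) (v q * (q - p)) := by
  rcases hpq.eq_or_lt with rfl | hlt
  · simp
  obtain ⟨x, hx, hvx⟩ := exists_hasDerivAt_eq_slope u v hlt (HasDerivWithinAt.continuousOn hu)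
    fun x hx => (hu x (Ioo_subset_Icc_self hx)).hasDerivAt (Icc_mem_nhds hx.1 hx.2)
  have hpq' : 0 < q - p := sub_pos.2 hlt
  rw [eq_div_iff hpq'.ne'] at hvx
  have hx' := Ioo_subset_Icc_self hx
  rw [← hvx]
  exact ⟨mul_le_mul_of_nonneg_right (hv (left_mem_Icc.2 hpq) hx' hx'.1) hpq'.le,
    mul_le_mul_of_nonneg_right (hv hx' (right_mem_Icc.2 hpq) hx'.2) hpq'.le⟩

end ConvexSolutions

section StraightScheme

variable {N : ℝ → ℝ → ℝ} {m : Mesh} {u v : ℝ → ℝ}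

lemma continuous_alphaC (hN : ContDiff ℝ 1 (Function.uncurry N)) (xi : ℝ) :
    Continuous fun w : ℝ × ℝ × ℝ => alphaC N xi w.1 w.2.1 w.2.2 := by
  have h {f : ℝ → ℝ → ℝ} (hf : Continuous (Function.uncurry f)) :
      Continuous fun w : ℝ × ℝ × ℝ => f w.2.1 xi :=
    hf.comp (continuous_snd.fst.prodMk continuous_const)
  exact ((((h (continuous_pd1 hN)).mul continuous_fst).add (h (continuous_pd2 hN))).mul
    (continuous_snd.snd.sub continuous_const)).add (h hN.continuous)

lemma isStraightSol_iff :
    IsStraightSol N (m.pt 0) (m.pt m.n) m u v ↔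
      ∀ i < m.n, ∀ x ∈ Icc (m.pt i) (m.pt (i + 1)),
        HasDerivWithinAt u (v x) (Icc (m.pt i) (m.pt (i + 1))) x ∧
        HasDerivWithinAt v (alphaC N (m.pt i) (v (m.pt i)) (u (m.pt i)) x * u x)
          (Icc (m.pt i) (m.pt (i + 1))) x := by
  refine ⟨fun h i hi x hx => ?_, fun h => ⟨?_, ?_, fun i hi x hx => (h i hi x hx).2⟩⟩
  · have hsub := Icc_succ_subset_Icc m.monotoneOn_pt hi
    exact ⟨(h.1 x (hsub hx)).mono hsub, h.2.2 i hi x hx⟩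
  · exact hasDerivWithinAt_Icc_of_Icc_succ m.monotoneOn_pt fun i hi x hx => (h i hi x hx).1
  · exact continuousOn_Icc_of_Icc_succ m.monotoneOn_pt fun i hi =>
      HasDerivWithinAt.continuousOn fun x hx => (h i hi x hx).2

-- Solving the scheme in the Banach algebra `C(T, ℝ)` yields solutions that depend continuously on
-- the parameter in `T`.
lemma exists_isStraightSol_family {T : Type*} [TopologicalSpace T] [CompactSpace T]
    (hN : ContDiff ℝ 1 (Function.uncurry N)) (m : Mesh) (u₀ v₀ : C(T, ℝ)) :
    ∃ U V : ℝ → C(T, ℝ), U (m.pt 0) = u₀ ∧ V (m.pt 0) = v₀ ∧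
      ∀ k, IsStraightSol N (m.pt 0) (m.pt m.n) m (U · k) (V · k) := by
  let A (i : ℕ) (z : C(T, ℝ) × C(T, ℝ)) : C(ℝ, C(T, ℝ)) :=
    ContinuousMap.curry ⟨fun w => alphaC N (m.pt i) (z.2 w.2) (z.1 w.2) w.1,
      (continuous_alphaC hN (m.pt i)).comp
        (f := fun w : ℝ × T => (z.2 w.2, z.1 w.2, w.1)) (by fun_prop)⟩
  obtain ⟨Y, hY₀, hY⟩ := exists_hasDerivWithinAt_of_forall_Icc_succ
    (f := fun i z x y => (y.2, A i z x * y.1)) m.monotoneOn_pt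
    (fun i hi z => exists_hasDerivWithinAt_second_order_linear (m.mono i hi).le
      (A i z).continuous.continuousOn z) (u₀, v₀)
  refine ⟨fun x => (Y x).1, fun x => (Y x).2, congrArg Prod.fst hY₀, congrArg Prod.snd hY₀,
    fun k => isStraightSol_iff.2 fun i hi x hx => ?_⟩
  have heval {F : ℝ → C(T, ℝ)} {F' : C(T, ℝ)} {s : Set ℝ} (h : HasDerivWithinAt F F' s x) :
      HasDerivWithinAt (F · k) (F' k) s x :=
    (ContinuousMap.evalCLM ℝ k : C(T, ℝ) →L[ℝ] ℝ).hasFDerivAt.comp_hasDerivWithinAt x h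
  exact ⟨heval (hY i hi x hx).fst, heval (hY i hi x hx).snd⟩

namespace IsStraightSol

lemma eqOn_zero (hN : ContDiff ℝ 1 (Function.uncurry N))
    (h : IsStraightSol N (m.pt 0) (m.pt m.n) m u v) (hu : u (m.pt 0) = 0) (hv : v (m.pt 0) = 0) :
    EqOn (fun x => (u x, v x)) 0 (Icc (m.pt 0) (m.pt m.n)) := by
  have hcell (i) (hi : i < m.n) (h₀ : (u (m.pt i), v (m.pt i)) = 0) :
      EqOn (fun x => (u x, v x)) 0 (Icc (m.pt i) (m.pt (i + 1))) :=
    eqOn_zero_of_second_order_linear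
      (a := alphaC N (m.pt i) (v (m.pt i)) (u (m.pt i)))
      ((continuous_alphaC hN (m.pt i)).comp
        (continuous_const.prodMk (continuous_const.prodMk continuous_id))).continuousOn
      (fun x hx => (isStraightSol_iff.1 h i hi x hx).1.prodMk
        (isStraightSol_iff.1 h i hi x hx).2) h₀
  have hknot (i) (hi : i ≤ m.n) : (u (m.pt i), v (m.pt i)) = 0 := by
    induction i with
    | zero => exact Prod.ext hu hv
    | succ i ih => exact hcell i hi (ih (Nat.le_of_succ_le hi)) (right_mem_Icc.2 (m.mono i hi).le)
  intro x hx
  obtain ⟨i, hi, hxi⟩ := exists_mem_Icc_succ m.npos hx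
  exact hcell i hi (hknot i hi.le) hxi

end IsStraightSol

lemma FirstOrderHypH.alphaC_nonneg {a b : ℝ} (hH : FirstOrderHypH N a b) {xi p q x : ℝ}
    (hxi : xi ∈ Icc a b) (hp : 0 ≤ p) (hq : 0 ≤ q) (hx : xi ≤ x) : 0 ≤ alphaC N xi p q x :=
  add_nonneg (mul_nonneg (add_nonneg (mul_nonneg (hH.pd1_nonneg q hq xi hxi) hp)
    (hH.pd2_nonneg q hq xi hxi)) (sub_nonneg.2 hx)) (hH.nonneg q hq xi hxi)

namespace IsStraightSol

lemma monotoneOn (h : IsStraightSol N (m.pt 0) (m.pt m.n) m u v)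
    (hH : FirstOrderHypH N (m.pt 0) (m.pt m.n)) (hu : 0 ≤ u (m.pt 0)) (hv : 0 < v (m.pt 0)) :
    MonotoneOn u (Icc (m.pt 0) (m.pt m.n)) ∧ MonotoneOn v (Icc (m.pt 0) (m.pt m.n)) := by
  have hcell (i) (hi : i < m.n) (hui : 0 ≤ u (m.pt i)) (hvi : 0 < v (m.pt i)) :
      MonotoneOn u (Icc (m.pt i) (m.pt (i + 1))) ∧ MonotoneOn v (Icc (m.pt i) (m.pt (i + 1))) :=
    monotoneOn_of_hasDerivWithinAt_mul (fun x hx => (isStraightSol_iff.1 h i hi x hx).1)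
      (fun x hx => (isStraightSol_iff.1 h i hi x hx).2)
      (fun x hx => hH.alphaC_nonneg (m.pt_mem_Icc hi.le) hvi.le hui hx.1) hui hvi
  have hknot (i) (hi : i ≤ m.n) : 0 ≤ u (m.pt i) ∧ 0 < v (m.pt i) := by
    induction i with
    | zero => exact ⟨hu, hv⟩
    | succ i ih =>
      obtain ⟨hui, hvi⟩ := ih (Nat.le_of_succ_le hi)
      have hle := (m.mono i hi).le
      have hmono := hcell i hi hui hvi
      exact ⟨hui.trans (hmono.1 (left_mem_Icc.2 hle) (right_mem_Icc.2 hle) hle),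
        hvi.trans_le (hmono.2 (left_mem_Icc.2 hle) (right_mem_Icc.2 hle) hle)⟩
  have hmono (i) (hi : i < m.n) := hcell i hi (hknot i hi.le).1 (hknot i hi.le).2
  exact ⟨monotoneOn_Icc_of_Icc_succ m.monotoneOn_pt fun i hi => (hmono i hi).1,
    monotoneOn_Icc_of_Icc_succ m.monotoneOn_pt fun i hi => (hmono i hi).2⟩

lemma growth (h : IsStraightSol N (m.pt 0) (m.pt m.n) m u v)
    (hH : FirstOrderHypH N (m.pt 0) (m.pt m.n)) (hu : u (m.pt 0) = 0) (hv : 0 < v (m.pt 0)) {x : ℝ}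
    (hx : x ∈ Icc (m.pt 0) (m.pt m.n)) :
    v (m.pt 0) ≤ v x ∧ u x ∈ Icc (v (m.pt 0) * (x - m.pt 0)) (v x * (x - m.pt 0)) := by
  have hvmono := (h.monotoneOn hH hu.ge hv).2
  have hsub : Icc (m.pt 0) x ⊆ Icc (m.pt 0) (m.pt m.n) := Icc_subset_Icc_right hx.2
  have hux := sub_mem_Icc_of_hasDerivWithinAt_of_monotoneOn hx.1
    (fun y hy => (h.1 y (hsub hy)).mono hsub) (hvmono.mono hsub)
  rw [hu, sub_zero] at hux
  exact ⟨hvmono (left_mem_Icc.2 (hx.1.trans hx.2)) hx hx.1, hux⟩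

lemma pos (h : IsStraightSol N (m.pt 0) (m.pt m.n) m u v)
    (hH : FirstOrderHypH N (m.pt 0) (m.pt m.n)) (hu : u (m.pt 0) = 0) (hv : 0 < v (m.pt 0)) {x : ℝ}
    (hx : x ∈ Ioc (m.pt 0) (m.pt m.n)) : 0 < u x ∧ 0 < v x := by
  obtain ⟨hvx, hux, -⟩ := h.growth hH hu hv (Ioc_subset_Icc_self hx)
  exact ⟨(mul_pos hv (sub_pos.2 hx.1)).trans_le hux, hv.trans_le hvx⟩

lemma alphaC_mul_nonneg (h : IsStraightSol N (m.pt 0) (m.pt m.n) m u v)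
    (hH : FirstOrderHypH N (m.pt 0) (m.pt m.n)) (hu : 0 ≤ u (m.pt 0)) (hv : 0 < v (m.pt 0)) {i : ℕ}
    (hi : i < m.n) {x : ℝ} (hx : x ∈ Icc (m.pt i) (m.pt (i + 1))) :
    0 ≤ alphaC N (m.pt i) (v (m.pt i)) (u (m.pt i)) x * u x := by
  obtain ⟨humono, hvmono⟩ := h.monotoneOn hH hu hv
  have hleft := left_mem_Icc.2 m.pt_zero_lt_pt_n.le
  have hi' := m.pt_mem_Icc hi.le
  have hx' := Icc_succ_subset_Icc m.monotoneOn_pt hi hx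
  exact mul_nonneg (hH.alphaC_nonneg hi' (hv.le.trans (hvmono hleft hi' hi'.1))
    (hu.trans (humono hleft hi' hi'.1)) hx.1) (hu.trans (humono hleft hx' hx'.1))

end IsStraightSol

lemma exists_isStraightSol_of_slope_mem_Icc (hN : ContDiff ℝ 1 (Function.uncurry N)) (m : Mesh)
    {K : ℝ} (hK : 0 ≤ K) :
    ∃ u v : ℝ → ℝ → ℝ, (∀ x, Continuous (u · x) ∧ Continuous (v · x)) ∧ ∀ k ∈ Icc 0 K,
      IsStraightSol N (m.pt 0) (m.pt m.n) m (u k) (v k) ∧ u k (m.pt 0) = 0 ∧ v k (m.pt 0) = k := by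
  obtain ⟨U, V, hU, hV, hUV⟩ := exists_isStraightSol_family hN m 0
    (⟨Subtype.val, continuous_subtype_val⟩ : C(Icc 0 K, ℝ))
  refine ⟨fun k x => U x (projIcc 0 K hK k), fun k x => V x (projIcc 0 K hK k),
    fun x => ⟨(U x).continuous.comp continuous_projIcc, (V x).continuous.comp continuous_projIcc⟩,
    fun k hk => ⟨hUV _, by simp [hU], by simp [hV, projIcc_of_mem hK hk]⟩⟩

end StraightScheme

section RecSlope

open scoped Topology

/-- The reciprocal slope `1 / x'` at distance `r ≥ 0` from the left end of a cell, for the solution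
of `x'' = -(A r + C) x'³` whose reciprocal slope is `p` at `r = 0`. The equation reads
`(1 / x')² = p² + ∫ 2 (A r + C)`; the truncation `max r 0` extends it continuously to `r < 0`. -/
def recSlope (p A C r : ℝ) : ℝ := √(p ^ 2 + A * max r 0 ^ 2 + 2 * C * max r 0)

variable {p A C : ℝ}

lemma recSlope_pos (hp : 0 < p) (hA : 0 ≤ A) (hC : 0 ≤ C) (r : ℝ) : 0 < recSlope p A C r := by
  have : 0 ≤ max r 0 := le_max_right _ _
  exact Real.sqrt_pos.2 (by positivity)

lemma recSlope_zero (hp : 0 ≤ p) : recSlope p A C 0 = p := by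
  simp [recSlope, Real.sqrt_sq hp]

lemma continuous_recSlope {T : Type*} [TopologicalSpace T] {p A C r : T → ℝ} (hp : Continuous p)
    (hA : Continuous A) (hC : Continuous C) (hr : Continuous r) :
    Continuous fun k => recSlope (p k) (A k) (C k) (r k) := by
  unfold recSlope
  fun_prop

lemma continuous_inv_recSlope (hp : 0 < p) (hA : 0 ≤ A) (hC : 0 ≤ C) :
    Continuous fun r => (recSlope p A C r)⁻¹ :=
  (continuous_recSlope continuous_const continuous_const continuous_const continuous_id).inv₀
    fun r => (recSlope_pos hp hA hC r).ne'

lemma hasDerivWithinAt_inv_recSlope (hp : 0 < p) (hA : 0 ≤ A) (hC : 0 ≤ C) {r : ℝ} (hr : 0 ≤ r) :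
    HasDerivWithinAt (fun r => (recSlope p A C r)⁻¹) (-(A * r + C) * (recSlope p A C r)⁻¹ ^ 3)
      (Ici 0) r := by
  have hval : EqOn (recSlope p A C) (fun r => √(p ^ 2 + A * r ^ 2 + 2 * C * r)) (Ici 0) :=
    fun r hr => by simp only [recSlope, max_eq_left (mem_Ici.1 hr)]
  have hpos : 0 < p ^ 2 + A * r ^ 2 + 2 * C * r := by positivity
  have hquad : HasDerivAt (fun r => p ^ 2 + A * r ^ 2 + 2 * C * r) (2 * (A * r + C)) r :=
    ((((hasDerivAt_pow 2 r).const_mul A).const_add (p ^ 2)).add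
      ((hasDerivAt_id' r).const_mul (2 * C))).congr_deriv (by push_cast; ring)
  refine ((hquad.sqrt hpos.ne').inv (Real.sqrt_pos.2 hpos).ne').hasDerivWithinAt.congr_of_mem
    (fun r hr => congrArg Inv.inv (hval hr)) hr |>.congr_deriv ?_
  rw [hval hr]
  field_simp

lemma recSlope_le_add_mul {R r : ℝ} (hp : 0 ≤ p) (hR : 0 ≤ R) (hA : A ≤ R ^ 2) (hC : C ≤ R * p)
    (hr : 0 ≤ r) : recSlope p A C r ≤ p + R * r := by
  rw [recSlope, max_eq_left hr]
  refine Real.sqrt_le_iff.2 ⟨by positivity, ?_⟩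
  calc p ^ 2 + A * r ^ 2 + 2 * C * r ≤ p ^ 2 + R ^ 2 * r ^ 2 + 2 * (R * p) * r := by gcongr
    _ = (p + R * r) ^ 2 := by ring

lemma integral_inv_add_mul {R h : ℝ} (hp : 0 < p) (hR : 0 < R) (hh : 0 ≤ h) :
    ∫ r in (0 : ℝ)..h, (p + R * r)⁻¹ = (Real.log (p + R * h) - Real.log p) / R := by
  have hne {r : ℝ} (hr : r ∈ uIcc 0 h) : p + R * r ≠ 0 := by
    rw [uIcc_of_le hh] at hr
    have := hr.1
    positivity
  have hderiv (r : ℝ) (hr : r ∈ uIcc 0 h) :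
      HasDerivAt (fun r => Real.log (p + R * r) / R) (p + R * r)⁻¹ r := by
    have := ((((hasDerivAt_id' r).const_mul R).const_add p).log (hne hr)).div_const R
    exact this.congr_deriv (by field_simp)
  rw [intervalIntegral.integral_eq_sub_of_hasDerivAt hderiv
    (ContinuousOn.intervalIntegrable (ContinuousOn.inv₀ (by fun_prop) fun r hr => hne hr)),
    mul_zero, add_zero, sub_div]

lemma log_sub_log_div_le_integral_inv_recSlope {R h : ℝ} (hp : 0 < p) (hA : A ∈ Icc 0 (R ^ 2))
    (hC : C ∈ Icc 0 (R * p)) (hR : 0 < R) (hh : 0 ≤ h) :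
    (Real.log (p + R * h) - Real.log p) / R ≤ ∫ r in (0 : ℝ)..h, (recSlope p A C r)⁻¹ := by
  rw [← integral_inv_add_mul hp hR hh]
  refine intervalIntegral.integral_mono_on hh (ContinuousOn.intervalIntegrable ?_)
    ((continuous_inv_recSlope hp hA.1 hC.1).intervalIntegrable _ _) fun r hr =>
      inv_anti₀ (recSlope_pos hp hA.1 hC.1 r) (recSlope_le_add_mul hp.le hR.le hA.2 hC.2 hr.1)
  refine ContinuousOn.inv₀ (by fun_prop) fun r hr => ?_
  rw [uIcc_of_le hh] at hr
  have := hr.1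
  positivity

lemma tendsto_integral_inv_recSlope_atTop {ι : Type*} {l : Filter ι} {p A C h : ι → ℝ} {R d : ℝ}
    (hR : 0 < R) (hd : 0 < d) (hp : Tendsto p l (𝓝[>] 0)) (hA : ∀ᶠ k in l, A k ∈ Icc 0 (R ^ 2))
    (hC : ∀ᶠ k in l, C k ∈ Icc 0 (R * p k)) (hh : ∀ᶠ k in l, d ≤ h k) :
    Tendsto (fun k => ∫ r in (0 : ℝ)..h k, (recSlope (p k) (A k) (C k) r)⁻¹) l atTop := by
  have hlog : Tendsto (fun k => (Real.log (R * d) - Real.log (p k)) / R) l atTop :=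
    (tendsto_atTop_add_const_left l (Real.log (R * d)) (tendsto_neg_atBot_atTop.comp
      (Real.tendsto_log_nhdsGT_zero.comp hp))).atTop_div_const hR
  refine tendsto_atTop_mono' l ?_ hlog
  filter_upwards [hA, hC, hh, hp.eventually self_mem_nhdsWithin] with k hAk hCk hhk hpk
  have hpk : 0 < p k := hpk
  refine le_trans ?_ (log_sub_log_div_le_integral_inv_recSlope hpk hAk hCk hR (hd.le.trans hhk))
  have hle : R * d ≤ p k + R * h k :=
    (mul_le_mul_of_nonneg_left hhk hR.le).trans (le_add_of_nonneg_left hpk.le)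
  gcongr

end RecSlope

/-- Coefficients of the inverse cell equation `x'' = -(A (v - u) + C) x'³`: `A = lin u z` and
`C = const u z` depend on the left knot `u` and on the state `z = (x u, 1 / x' u)` there. -/
structure InvCoeff where
  lin : ℝ → ℝ × ℝ → ℝ
  const : ℝ → ℝ × ℝ → ℝ
  lin_nonneg {u : ℝ} {z : ℝ × ℝ} (hu : 0 ≤ u) (hz : 0 < z.2) : 0 ≤ lin u z
  const_nonneg {u : ℝ} {z : ℝ × ℝ} (hu : 0 ≤ u) (hz : 0 < z.2) : 0 ≤ const u z
  continuousOn_lin : ContinuousOn (Function.uncurry lin) (Ici 0 ×ˢ {z | 0 < z.2})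
  continuousOn_const : ContinuousOn (Function.uncurry const) (Ici 0 ×ˢ {z | 0 < z.2})

namespace InvCoeff

/-- The state at `v` of the solution of the inverse cell equation with state `z` at `u`. -/
def cell (F : InvCoeff) (u : ℝ) (z : ℝ × ℝ) (v : ℝ) : ℝ × ℝ :=
  (z.1 + ∫ r in (0 : ℝ)..(v - u), (recSlope z.2 (F.lin u z) (F.const u z) r)⁻¹,
    recSlope z.2 (F.lin u z) (F.const u z) (v - u))

/-- The states at the knots `t i` of the inverse scheme started with state `z` at `t 0`. -/
def knot (F : InvCoeff) (t : ℕ → ℝ) (z : ℝ × ℝ) : ℕ → ℝ × ℝ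
  | 0 => z
  | i + 1 => F.cell (t i) (F.knot t z i) (t (i + 1))

variable (F : InvCoeff) {u v : ℝ} {t : ℕ → ℝ} {z : ℝ × ℝ} {n : ℕ}

lemma cell_snd_pos (hu : 0 ≤ u) (hz : 0 < z.2) (v : ℝ) : 0 < (F.cell u z v).2 :=
  recSlope_pos hz (F.lin_nonneg hu hz) (F.const_nonneg hu hz) _

lemma cell_self (hz : 0 ≤ z.2) : F.cell u z u = z := by
  simp [cell, recSlope_zero hz]

lemma hasDerivAt_cell_fst (hu : 0 ≤ u) (hz : 0 < z.2) (v : ℝ) :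
    HasDerivAt (fun v => (F.cell u z v).1) (F.cell u z v).2⁻¹ v := by
  have hcont := continuous_inv_recSlope hz (F.lin_nonneg hu hz) (F.const_nonneg hu hz)
  have hint := (hcont.integral_hasStrictDerivAt 0 (v - u)).hasDerivAt
  exact (hint.comp_sub_const v u).const_add z.1

lemma hasDerivWithinAt_inv_cell_snd (hu : 0 ≤ u) (hz : 0 < z.2) (huv : u ≤ v) :
    HasDerivWithinAt (fun v => (F.cell u z v).2⁻¹)
      (-(F.lin u z * (v - u) + F.const u z) * (F.cell u z v).2⁻¹ ^ 3) (Ici u) v := by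
  have h := (hasDerivWithinAt_inv_recSlope hz (F.lin_nonneg hu hz) (F.const_nonneg hu hz)
    (sub_nonneg.2 huv)).scomp (h := (· - u)) v ((hasDerivAt_id' v).sub_const u).hasDerivWithinAt
    fun w (hw : u ≤ w) => sub_nonneg.2 hw
  exact h.congr_deriv (one_smul ℝ _)

lemma fst_le_cell_fst (hu : 0 ≤ u) (hz : 0 < z.2) (huv : u ≤ v) : z.1 ≤ (F.cell u z v).1 :=
  le_add_of_nonneg_right (intervalIntegral.integral_nonneg (sub_nonneg.2 huv) fun _ _ =>
    (inv_pos.2 (recSlope_pos hz (F.lin_nonneg hu hz) (F.const_nonneg hu hz) _)).le)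

lemma knot_snd_pos (ht : ∀ i, 0 ≤ t i) (hz : 0 < z.2) (i : ℕ) : 0 < (F.knot t z i).2 := by
  induction i with
  | zero => exact hz
  | succ i ih => exact F.cell_snd_pos (ht i) ih _

lemma monotoneOn_knot_fst (ht₀ : ∀ i, 0 ≤ t i) (ht : MonotoneOn t (Iic n)) (hz : 0 < z.2) :
    MonotoneOn (fun i => (F.knot t z i).1) (Iic n) :=
  monotoneOn_of_le_succ ordConnected_Iic fun i _ hi hi' =>
    F.fst_le_cell_fst (ht₀ i) (F.knot_snd_pos ht₀ hz i) (ht hi hi' i.le_succ)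

lemma knot_eq_of_forall_eq (ht : ∀ i ≤ n, t i = t 0) (hz : 0 ≤ z.2) : F.knot t z n = z := by
  induction n with
  | zero => rfl
  | succ n ih =>
    rw [knot, ih fun i hi => ht i (hi.trans n.le_succ), ht (n + 1) le_rfl, ht n n.le_succ,
      F.cell_self hz]

section Continuity

variable {T : Type*} [TopologicalSpace T]

lemma continuous_cell {u v : T → ℝ} {z : T → ℝ × ℝ} (hu : Continuous u) (hz : Continuous z)
    (hv : Continuous v) (hu₀ : ∀ k, 0 ≤ u k) (hz₀ : ∀ k, 0 < (z k).2) :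
    Continuous fun k => F.cell (u k) (z k) (v k) := by
  have hlin : Continuous fun k => F.lin (u k) (z k) :=
    F.continuousOn_lin.comp_continuous (hu.prodMk hz) fun k => ⟨hu₀ k, hz₀ k⟩
  have hconst : Continuous fun k => F.const (u k) (z k) :=
    F.continuousOn_const.comp_continuous (hu.prodMk hz) fun k => ⟨hu₀ k, hz₀ k⟩
  have hrec : Continuous fun w : T × ℝ =>
      recSlope (z w.1).2 (F.lin (u w.1) (z w.1)) (F.const (u w.1) (z w.1)) w.2 :=
    continuous_recSlope (hz.snd.comp continuous_fst) (hlin.comp continuous_fst)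
      (hconst.comp continuous_fst) continuous_snd
  refine (hz.fst.add (intervalIntegral.continuous_parametric_intervalIntegral_of_continuous
    (hrec.inv₀ fun w => ?_) (hv.sub hu))).prodMk
    (hrec.comp (continuous_id.prodMk (hv.sub hu)))
  exact (recSlope_pos (hz₀ w.1) (F.lin_nonneg (hu₀ w.1) (hz₀ w.1))
    (F.const_nonneg (hu₀ w.1) (hz₀ w.1)) w.2).ne'

lemma continuous_knot {t : T → ℕ → ℝ} {z : T → ℝ × ℝ} (ht : ∀ i, Continuous fun k => t k i)
    (hz : Continuous z) (ht₀ : ∀ k i, 0 ≤ t k i) (hz₀ : ∀ k, 0 < (z k).2) (i : ℕ) :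
    Continuous fun k => F.knot (t k) (z k) i := by
  induction i with
  | zero => exact hz
  | succ i ih =>
    exact F.continuous_cell (ht i) ih (ht (i + 1)) (fun k => ht₀ k i)
      fun k => F.knot_snd_pos (ht₀ k) (hz₀ k) i

end Continuity

end InvCoeff

section InverseScheme

open scoped Topology

variable {N : ℝ → ℝ → ℝ} {a b : ℝ} {m : Mesh} {s ub : ℝ}

lemma isInvSol_of_forall_Icc_succ {X X' : ℝ → ℝ} (hs₀ : ubar m s 0 = s) (hsn : ubar m s m.n = ub)
    (h : ∀ i < m.n, ∀ v ∈ Icc (ubar m s i) (ubar m s (i + 1)),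
      HasDerivWithinAt X (X' v) (Icc (ubar m s i) (ubar m s (i + 1))) v ∧
      HasDerivWithinAt X'
        (betaC N (ubar m s i) (X' (ubar m s i)) (X (ubar m s i)) v * (X' v) ^ 3)
        (Icc (ubar m s i) (ubar m s (i + 1))) v) : IsInvSol N ub m s X X' := by
  have hX := hasDerivWithinAt_Icc_of_Icc_succ (m.monotoneOn_ubar s) fun i hi v hv => (h i hi v hv).1
  have hX' := continuousOn_Icc_of_Icc_succ (m.monotoneOn_ubar s) fun i hi =>
    HasDerivWithinAt.continuousOn fun v hv => (h i hi v hv).2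
  rw [hs₀, hsn] at hX hX'
  exact ⟨hX, hX', fun i hi v hv => (h i hi v hv).2⟩

/-- The coefficients `-β_i` of the inverse scheme. Positions are projected onto `[a, b]`, where the
signs of `N` are known; this changes nothing for solutions that stay in `[a, b]`. -/
def invCoeff (hN : ContDiff ℝ 1 (Function.uncurry N)) (hH : FirstOrderHypH N a b) (hab : a ≤ b) :
    InvCoeff where
  lin u z := pd1 (Ncal N) u (projIcc a b hab z.1) + pd2 (Ncal N) u (projIcc a b hab z.1) * z.2⁻¹
  const u z := Ncal N u (projIcc a b hab z.1)
  lin_nonneg {u z} hu hz := by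
    have hx := (projIcc a b hab z.1).2
    have hN' := hN.differentiable one_ne_zero
    rw [pd1_Ncal hN', pd2_Ncal hN']
    have h₀ := hH.nonneg u hu _ hx
    have h₁ := hH.pd1_nonneg u hu _ hx
    have h₂ := hH.pd2_nonneg u hu _ hx
    positivity
  const_nonneg hu _ := mul_nonneg (hH.nonneg _ hu _ (projIcc a b hab _).2) hu
  continuousOn_lin := by
    have hproj : Continuous fun w : ℝ × ℝ × ℝ => (w.1, (projIcc a b hab w.2.1 : ℝ)) := by fun_prop
    have h₁ := (continuous_pd1 (contDiff_uncurry_Ncal hN)).comp hproj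
    have h₂ := (continuous_pd2 (contDiff_uncurry_Ncal hN)).comp hproj
    exact h₁.continuousOn.add (h₂.continuousOn.mul
      (ContinuousOn.inv₀ (by fun_prop) fun w hw => (mem_prod.1 hw).2.ne'))
  continuousOn_const := by
    have hproj : Continuous fun w : ℝ × ℝ × ℝ => (w.1, (projIcc a b hab w.2.1 : ℝ)) := by fun_prop
    exact ((contDiff_uncurry_Ncal hN).continuous.comp hproj).continuousOn

section Coefficients

variable (hN : ContDiff ℝ 1 (Function.uncurry N)) (hH : FirstOrderHypH N a b) (hab : a ≤ b)

lemma betaC_inv_eq_invCoeff {u : ℝ} {z : ℝ × ℝ} (hz : z.1 ∈ Icc a b) (v : ℝ) :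
    betaC N u z.2⁻¹ z.1 v =
      -((invCoeff hN hH hab).lin u z * (v - u) + (invCoeff hN hH hab).const u z) := by
  simp only [betaC, invCoeff, projIcc_of_mem hab hz]
  ring

lemma invCoeff_le {c L p s R M : ℝ} (hc : c ∈ Icc a b) (hL : 0 ≤ L) (hp : 0 < p)
    (hs : s ∈ Icc 0 (p * L)) (hM : pd1 N s c * s + N s c + pd2 N s c * L ≤ M)
    (hMR : M ≤ R ^ 2) (hMLR : M * L ≤ R) :
    (invCoeff hN hH hab).lin s (c, p) ≤ R ^ 2 ∧ (invCoeff hN hH hab).const s (c, p) ≤ R * p := by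
  have hN' := hN.differentiable one_ne_zero
  have h₀ := hH.nonneg s hs.1 c hc
  have h₁ := mul_nonneg (hH.pd1_nonneg s hs.1 c hc) hs.1
  have h₂ := hH.pd2_nonneg s hs.1 c hc
  simp only [invCoeff, projIcc_of_mem hab hc, pd1_Ncal hN', pd2_Ncal hN', Ncal]
  constructor
  · calc pd1 N s c * s + N s c + pd2 N s c * s * p⁻¹
        = pd1 N s c * s + N s c + pd2 N s c * (s / p) := by ring
      _ ≤ pd1 N s c * s + N s c + pd2 N s c * L := by
        gcongr
        exact (div_le_iff₀' hp).2 hs.2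
      _ ≤ R ^ 2 := hM.trans hMR
  · calc N s c * s ≤ M * (p * L) :=
        mul_le_mul (by linarith [mul_nonneg h₂ hL]) hs.2 hs.1
          (by linarith [mul_nonneg h₂ hL])
      _ = M * L * p := by ring
      _ ≤ R * p := by gcongr

lemma exists_eventually_invCoeff_le {ι : Type*} {l : Filter ι} {s p : ι → ℝ} {c L : ℝ}
    (hc : c ∈ Icc a b) (hL : 0 ≤ L) (hs : Tendsto s l (𝓝 0))
    (hsp : ∀ᶠ k in l, 0 < p k ∧ s k ∈ Icc 0 (p k * L)) :
    ∃ R > 0, ∀ᶠ k in l, (invCoeff hN hH hab).lin (s k) (c, p k) ≤ R ^ 2 ∧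
      (invCoeff hN hH hab).const (s k) (c, p k) ≤ R * p k := by
  set φ : ℝ → ℝ := fun r => pd1 N r c * r + N r c + pd2 N r c * L with hφ
  have hφ_cont : Continuous φ := by
    have hpair : Continuous fun r : ℝ => (r, c) := by fun_prop
    exact ((((continuous_pd1 hN).comp hpair).mul continuous_id).add
      (hN.continuous.comp hpair)).add (((continuous_pd2 hN).comp hpair).mul continuous_const)
  have hφ₀ : 0 ≤ φ 0 := by
    have h₀ := hH.nonneg 0 le_rfl c hc
    have h₂ := hH.pd2_nonneg 0 le_rfl c hc
    simpa only [hφ, mul_zero, zero_add] using add_nonneg h₀ (mul_nonneg h₂ hL)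
  set M := φ 0 + 1
  have hφM : ∀ᶠ k in l, φ (s k) ≤ M :=
    ((hφ_cont.tendsto 0).comp hs).eventually (eventually_le_nhds (lt_add_one (φ 0)))
  have hM : 0 < M := by positivity
  have hML : 0 ≤ M * L := mul_nonneg hM.le hL
  refine ⟨1 + M + M * L, by positivity, ?_⟩
  filter_upwards [hφM, hsp] with k hMk ⟨hpk, hsk⟩
  exact invCoeff_le hN hH hab hc hL hpk hsk hMk (by nlinarith) (by linarith)

lemma tendsto_cell_fst_atTop {ι : Type*} {l : Filter ι} {s p w : ι → ℝ} {c L d : ℝ}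
    (hc : c ∈ Icc a b) (hL : 0 ≤ L) (hd : 0 < d) (hp : Tendsto p l (𝓝[>] 0))
    (hs : Tendsto s l (𝓝 0)) (hsp : ∀ᶠ k in l, s k ∈ Icc 0 (p k * L))
    (hw : ∀ᶠ k in l, d ≤ w k - s k) :
    Tendsto (fun k => ((invCoeff hN hH hab).cell (s k) (c, p k) (w k)).1) l atTop := by
  have hpos : ∀ᶠ k in l, 0 < p k ∧ s k ∈ Icc 0 (p k * L) :=
    (hp.eventually self_mem_nhdsWithin).and hsp
  obtain ⟨R, hR, hbound⟩ := exists_eventually_invCoeff_le hN hH hab hc hL hs hpos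
  refine tendsto_atTop_add_const_left l c
    (tendsto_integral_inv_recSlope_atTop hR hd hp ?_ ?_ hw)
  · filter_upwards [hpos, hbound] with k ⟨hpk, hsk⟩ ⟨hlin, _⟩
    exact ⟨(invCoeff hN hH hab).lin_nonneg hsk.1 hpk, hlin⟩
  · filter_upwards [hpos, hbound] with k ⟨hpk, hsk⟩ ⟨_, hconst⟩
    exact ⟨(invCoeff hN hH hab).const_nonneg hsk.1 hpk, hconst⟩

lemma tendsto_knot_fst_atTop {ι : Type*} {l : Filter ι} {s p : ι → ℝ} {c L : ℝ}
    (hm : m.pt 0 = 0) (hc : c ∈ Icc a b) (hL : 0 ≤ L) (hp : Tendsto p l (𝓝[>] 0))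
    (hsp : ∀ᶠ k in l, s k ∈ Icc 0 (p k * L)) :
    Tendsto (fun k => ((invCoeff hN hH hab).knot (ubar m (s k)) (c, p k) m.n).1) l atTop := by
  have hs : Tendsto s l (𝓝 0) :=
    squeeze_zero' (hsp.mono fun _ h => h.1) (hsp.mono fun _ h => h.2)
      (by simpa using (hp.mono_right nhdsWithin_le_nhds).mul_const L)
  have hm₁ : 0 < m.pt 1 := by simpa [hm] using m.mono 0 m.npos
  have hstep : ∀ᶠ k in l, m.pt 1 / 2 ≤ ubar m (s k) 1 - s k := by
    filter_upwards [hs.eventually (eventually_le_nhds (half_pos hm₁))] with k hk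
    have hle : m.pt 1 ≤ ubar m (s k) 1 := le_max_left _ _
    linarith
  refine tendsto_atTop_mono' l ?_
    (tendsto_cell_fst_atTop hN hH hab hc hL (half_pos hm₁) hp hs hsp hstep)
  filter_upwards [hsp, hp.eventually self_mem_nhdsWithin] with k hsk hpk
  have hmono := (invCoeff hN hH hab).monotoneOn_knot_fst (t := ubar m (s k)) (z := (c, p k))
    (fun i => le_max_of_le_right hsk.1) (m.monotoneOn_ubar (s k)) hpk
  have h := hmono (show 1 ∈ Iic m.n from m.npos) self_mem_Iic m.npos
  have hs₀ : ubar m (s k) 0 = s k := by simpa [ubar, hm] using hsk.1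
  simpa only [InvCoeff.knot, hs₀, zero_add] using h

lemma exists_isInvSol {c p : ℝ} (hm₀ : m.pt 0 ≤ s) (hs : 0 ≤ s) (hsm : s ≤ m.pt m.n)
    (hc : c ∈ Icc a b) (hp : 0 < p)
    (hb : ((invCoeff hN hH hab).knot (ubar m s) (c, p) m.n).1 = b) :
    ∃ X X' : ℝ → ℝ, IsInvSol N (m.pt m.n) m s X X' ∧ X (m.pt m.n) = b ∧ X s = c ∧ X' s = 1 / p ∧
      ∀ v ∈ Icc s (m.pt m.n), 0 < X' v := by
  set F := invCoeff hN hH hab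
  set z := F.knot (ubar m s) (c, p)
  have hs₀ : ubar m s 0 = s := max_eq_right hm₀
  have hsn : ubar m s m.n = m.pt m.n := max_eq_left hsm
  have ht₀ (i : ℕ) : 0 ≤ ubar m s i := le_max_of_le_right hs
  have hz (i : ℕ) : 0 < (z i).2 := F.knot_snd_pos ht₀ hp i
  have hzmono := F.monotoneOn_knot_fst ht₀ (m.monotoneOn_ubar s) (z := (c, p)) hp
  have hzI {i : ℕ} (hi : i < m.n) : (z i).1 ∈ Icc a b :=
    ⟨hc.1.trans (hzmono (by simp) hi.le i.zero_le), (hzmono hi.le self_mem_Iic hi.le).trans_eq hb⟩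
  obtain ⟨y, hyknot, hycell⟩ := exists_eqOn_Icc_succ (n := m.n) (z := z) (m.monotoneOn_ubar s)
    (fun i => F.cell_self (u := ubar m s i) (hz i).le) fun _ => rfl
  have hy₀ := hyknot 0 (Nat.zero_le _)
  have hyn := hyknot m.n le_rfl
  rw [hs₀] at hy₀
  rw [hsn] at hyn
  refine ⟨fun v => (y v).1, fun v => (y v).2⁻¹, isInvSol_of_forall_Icc_succ hs₀ hsn ?_,
    by simpa [hyn], by simp [hy₀, z, InvCoeff.knot], by simp [hy₀, z, InvCoeff.knot],
    fun v hv => ?_⟩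
  · intro i hi v hv
    have hbeta := betaC_inv_eq_invCoeff hN hH hab (u := ubar m s i) (hzI hi) v
    simp only [hyknot i hi.le, hbeta, hycell i hi hv]
    constructor
    · exact (F.hasDerivAt_cell_fst (ht₀ i) (hz i) v).hasDerivWithinAt.congr_of_mem
        (fun w hw => by rw [hycell i hi hw]) hv
    · exact ((F.hasDerivWithinAt_inv_cell_snd (ht₀ i) (hz i) hv.1).mono Icc_subset_Ici_self
        ).congr_of_mem (fun w hw => by rw [hycell i hi hw]) hv
  · obtain ⟨i, hi, hvi⟩ := exists_mem_Icc_succ m.npos (t := ubar m s) (by rwa [hs₀, hsn])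
    simpa only [hycell i hi hvi] using inv_pos.2 (F.cell_snd_pos (ht₀ i) (hz i) v)

lemma exists_mem_Ioc_knot_fst_eq {c L K : ℝ} {s p : ℝ → ℝ} (hm : m.pt 0 = 0) (hac : a ≤ c)
    (hcb : c < b) (hL : 0 ≤ L) (hK : 0 < K) (hs : Continuous s) (hp : Continuous p)
    (hp₀ : p 0 = 0) (hsp : ∀ k ∈ Ioc 0 K, 0 < p k ∧ s k ∈ Icc 0 (p k * L))
    (hsK : m.pt m.n ≤ s K) :
    ∃ k ∈ Ioc 0 K, s k < m.pt m.n ∧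
      ((invCoeff hN hH hab).knot (ubar m (s k)) (c, p k) m.n).1 = b := by
  set f : ℝ → ℝ := fun k => ((invCoeff hN hH hab).knot (ubar m (s k)) (c, p k) m.n).1
  have hstay {k : ℝ} (hk : k ∈ Ioc 0 K) (hsk : m.pt m.n ≤ s k) : f k = c := by
    have ht (i : ℕ) (hi : i ≤ m.n) : ubar m (s k) i = s k :=
      max_eq_right ((m.pt_mem_Icc hi).2.trans hsk)
    exact congrArg Prod.fst ((invCoeff hN hH hab).knot_eq_of_forall_eq
      (fun i hi => (ht i hi).trans (ht 0 (Nat.zero_le _)).symm) (hsp k hk).1.le)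
  have hcont : ContinuousOn f (Ioc 0 K) := by
    have hres : Continuous fun k : Ioc 0 K => (k : ℝ) := continuous_subtype_val
    exact continuousOn_iff_continuous_domRestrict.2 (continuous_fst.comp
      ((invCoeff hN hH hab).continuous_knot
        (fun i => (continuous_const (y := m.pt i)).max (hs.comp hres))
        (continuous_const.prodMk (hp.comp hres))
        (fun k _ => le_max_of_le_right (hsp k k.2).2.1) (fun k => (hsp k k.2).1) m.n))
  have htop : Tendsto f (𝓝[Ioc 0 K] 0) atTop := by
    refine tendsto_knot_fst_atTop hN hH hab hm ⟨hac, hcb.le⟩ hL ?_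
      (eventually_mem_nhdsWithin.mono fun k hk => (hsp k hk).2)
    exact tendsto_nhdsWithin_iff.2 ⟨(hp.tendsto' 0 0 hp₀).mono_left inf_le_left,
      eventually_mem_nhdsWithin.mono fun k hk => (hsp k hk).1⟩
  have hKmem : K ∈ Ioc 0 K := right_mem_Ioc.2 hK
  have : (𝓝[Ioc 0 K] (0 : ℝ)).NeBot := left_nhdsWithin_Ioc_neBot hK
  obtain ⟨k, hk, hfk⟩ := isPreconnected_Ioc.intermediate_value_Ici
    (l := 𝓝[Ioc 0 K] 0) hKmem inf_le_right hcont htop ((hstay hKmem hsK).trans_le hcb.le)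
  exact ⟨k, hk, lt_of_not_ge fun hsk => hcb.ne ((hstay hk hsk).symm.trans hfk), hfk⟩

end Coefficients

lemma FirstOrderHypH.betaC_nonpos (hN : Differentiable ℝ (Function.uncurry N))
    (hH : FirstOrderHypH N a b) {u p x v : ℝ} (hu : 0 ≤ u) (hx : x ∈ Icc a b) (hp : 0 ≤ p)
    (hv : u ≤ v) : betaC N u p x v ≤ 0 := by
  have h₀ := hH.nonneg u hu x hx
  have h₁ := hH.pd1_nonneg u hu x hx
  have h₂ := hH.pd2_nonneg u hu x hx
  have hlin : 0 ≤ (pd1 N u x * u + N u x + pd2 N u x * u * p) * (v - u) :=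
    mul_nonneg (by positivity) (sub_nonneg.2 hv)
  rw [betaC, pd1_Ncal hN, pd2_Ncal hN, Ncal, neg_mul]
  linarith [mul_nonneg h₀ hu]

namespace IsInvSol

variable {X X' : ℝ → ℝ}

lemma strictMonoOn (h : IsInvSol N ub m s X X') (hX' : ∀ v ∈ Icc s ub, 0 < X' v) :
    StrictMonoOn X (Icc s ub) :=
  strictMonoOn_of_hasDerivWithinAt_pos (convex_Icc s ub)
    (HasDerivWithinAt.continuousOn h.1)
    (fun v hv => (h.1 v (interior_subset hv)).mono interior_subset)
    fun v hv => hX' v (interior_subset hv)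

lemma betaC_mul_nonpos (h : IsInvSol N (m.pt m.n) m s X X')
    (hN : Differentiable ℝ (Function.uncurry N)) (hm₀ : m.pt 0 ≤ s) (hs : 0 ≤ s)
    (hsm : s ≤ m.pt m.n) (hH : FirstOrderHypH N (X s) (X (m.pt m.n)))
    (hX' : ∀ v ∈ Icc s (m.pt m.n), 0 < X' v) {i : ℕ} (hi : i < m.n) {v : ℝ}
    (hv : v ∈ Icc (ubar m s i) (ubar m s (i + 1))) :
    betaC N (ubar m s i) (X' (ubar m s i)) (X (ubar m s i)) v * X' v ^ 3 ≤ 0 := by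
  have hmono := (h.strictMonoOn hX').monotoneOn
  have hcell := Icc_succ_subset_Icc (m.monotoneOn_ubar s) hi
  rw [show ubar m s 0 = s from max_eq_right hm₀,
    show ubar m s m.n = m.pt m.n from max_eq_left hsm] at hcell
  have hui := hcell (left_mem_Icc.2 (hv.1.trans hv.2))
  have hx : X (ubar m s i) ∈ Icc (X s) (X (m.pt m.n)) :=
    ⟨hmono (left_mem_Icc.2 hsm) hui hui.1, hmono hui (right_mem_Icc.2 hsm) hui.2⟩
  exact mul_nonpos_of_nonpos_of_nonneg
    (hH.betaC_nonpos hN (hs.trans hui.1) hx (hX' _ hui).le hv.1) (pow_pos (hX' _ (hcell hv)) 3).le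

end IsInvSol

end InverseScheme

section Shooting

variable {N : ℝ → ℝ → ℝ} {b : ℝ} {ms mi : Mesh}

lemma exists_isStraightSol_knot_fst_eq (hN : ContDiff ℝ 1 (Function.uncurry N))
    (hH : FirstOrderHypH N (ms.pt 0) b) (hab : ms.pt 0 ≤ b) (hcb : ms.pt ms.n < b)
    (hmi : mi.pt 0 = 0) :
    ∃ u u' : ℝ → ℝ, IsStraightSol N (ms.pt 0) (ms.pt ms.n) ms u u' ∧ u (ms.pt 0) = 0 ∧
      0 < u' (ms.pt 0) ∧ u (ms.pt ms.n) < mi.pt mi.n ∧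
      ((invCoeff hN hH hab).knot (ubar mi (u (ms.pt ms.n)))
        (ms.pt ms.n, u' (ms.pt ms.n)) mi.n).1 = b := by
  set L := ms.pt ms.n - ms.pt 0
  set K := mi.pt mi.n / L
  have hL : 0 < L := sub_pos.2 ms.pt_zero_lt_pt_n
  have hK : 0 < K := div_pos (hmi ▸ mi.pt_zero_lt_pt_n) hL
  have hHc := hH.mono (Icc_subset_Icc_right hcb.le)
  have hc := right_mem_Icc.2 ms.pt_zero_lt_pt_n.le
  obtain ⟨u, v, hcont, huv⟩ := exists_isStraightSol_of_slope_mem_Icc hN ms hK.le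
  have hgrowth {k : ℝ} (hk : k ∈ Ioc 0 K) :
      k ≤ v k (ms.pt ms.n) ∧ u k (ms.pt ms.n) ∈ Icc (k * L) (v k (ms.pt ms.n) * L) := by
    obtain ⟨hsol, hu, hv⟩ := huv k (Ioc_subset_Icc_self hk)
    simpa only [hv] using hsol.growth hHc hu (hk.1.trans_eq hv.symm) hc
  have hv₀ : v 0 (ms.pt ms.n) = 0 := by
    obtain ⟨hsol, hu, hv⟩ := huv 0 (left_mem_Icc.2 hK.le)
    exact congrArg Prod.snd (hsol.eqOn_zero hN hu hv hc)
  have huK : mi.pt mi.n ≤ u K (ms.pt ms.n) :=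
    (div_mul_cancel₀ _ hL.ne').ge.trans (hgrowth (right_mem_Ioc.2 hK)).2.1
  obtain ⟨k, hk, huk, hb⟩ := exists_mem_Ioc_knot_fst_eq hN hH hab hmi
    ms.pt_zero_lt_pt_n.le hcb hL.le hK (hcont (ms.pt ms.n)).1 (hcont (ms.pt ms.n)).2 hv₀
    (fun k hk => ⟨hk.1.trans_le (hgrowth hk).1,
      (mul_pos hk.1 hL).le.trans (hgrowth hk).2.1, (hgrowth hk).2.2⟩) huK
  obtain ⟨hsol, hu, hv⟩ := huv k (Ioc_subset_Icc_self hk)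
  exact ⟨u k, v k, hsol, hu, hv.symm ▸ hk.1, huk, hb⟩

lemma IsSchemePair.goodPair {u u' X X' : ℝ → ℝ}
    (h : IsSchemePair N (ms.pt 0) b (ms.pt ms.n) (mi.pt mi.n) ms mi u u' X X')
    (hN : Differentiable ℝ (Function.uncurry N)) (hH : FirstOrderHypH N (ms.pt 0) b)
    (hcb : ms.pt ms.n ≤ b) (hmi : mi.pt 0 = 0) (hu' : 0 < u' (ms.pt 0))
    (hX' : ∀ v ∈ Icc (u (ms.pt ms.n)) (mi.pt mi.n), 0 < X' v) :
    GoodPair N (ms.pt 0) b (ms.pt ms.n) (mi.pt mi.n) ms mi u u' X X' := by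
  have ⟨hu, hu₀, huc, hub, _, hX, hXb, hXc, _⟩ := h
  have hHc := hH.mono (Icc_subset_Icc_right hcb)
  have hHX : FirstOrderHypH N (X (u (ms.pt ms.n))) (X (mi.pt mi.n)) := by
    rw [hXc, hXb]
    exact hH.mono (Icc_subset_Icc_left ms.pt_zero_lt_pt_n.le)
  have hc := right_mem_Ioc.2 ms.pt_zero_lt_pt_n
  refine ⟨h, fun x hx => ?_,
    fun i hi x hx _ => hu.alphaC_mul_nonneg hHc hu₀.ge hu' hi hx, fun v hv => ?_,
    fun i hi v hv _ => hX.betaC_mul_nonpos hN (hmi.trans_le huc.le) huc.le hub.le hHX hX' hi hv⟩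
  · obtain ⟨hux, hux'⟩ := hu.pos hHc hu₀ hu' hx
    have hle := (hu.monotoneOn hHc hu₀.ge hu').1 (Ioc_subset_Icc_self hx)
      (Ioc_subset_Icc_self hc) hx.2
    exact ⟨hux, hle.trans_lt hub, hux'⟩
  · have hv' := Ioc_subset_Icc_self hv
    exact ⟨hXc.symm.trans_lt (hX.strictMonoOn hX' (left_mem_Icc.2 hub.le) hv' hv.1), hX' v hv'⟩

end Shooting

theorem scheme_pair_exists_general {a b c ub : ℝ} {N : ℝ → ℝ → ℝ}
    (hN : ContDiff ℝ 1 (Function.uncurry N)) (hH : FirstOrderHypH N a b) (hcb : c < b)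
    {ms mi : Mesh} (ha : ms.pt 0 = a) (hc : ms.pt ms.n = c) (h₀ : mi.pt 0 = 0)
    (hub : mi.pt mi.n = ub) :
    ∃ u u' X X' : ℝ → ℝ, GoodPair N a b c ub ms mi u u' X X' ∧ ∀ v ∈ Ioo (u c) ub, X v < b := by
  subst ha hc hub
  have hac := ms.pt_zero_lt_pt_n
  obtain ⟨u, u', hu, hu₀, hu', hub, hend⟩ :=
    exists_isStraightSol_knot_fst_eq hN hH (hac.trans hcb).le hcb h₀
  obtain ⟨huc, huc'⟩ :=
    hu.pos (hH.mono (Icc_subset_Icc_right hcb.le)) hu₀ hu' (right_mem_Ioc.2 hac)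
  obtain ⟨X, X', hX, hXb, hXc, hXc', hX'⟩ := exists_isInvSol hN hH (hac.trans hcb).le
    (h₀.trans_le huc.le) huc.le hub.le ⟨hac.le, hcb.le⟩ huc' hend
  have hpair : IsSchemePair N (ms.pt 0) b (ms.pt ms.n) (mi.pt mi.n) ms mi u u' X X' :=
    ⟨hu, hu₀, huc, hub, huc'.ne', hX, hXb, hXc, hXc'⟩
  refine ⟨u, u', X, X', hpair.goodPair (hN.differentiable one_ne_zero) hH hcb.le h₀ hu' hX',
    fun v hv => ?_⟩
  exact (hX.strictMonoOn hX' (Ioo_subset_Icc_self hv) (right_mem_Icc.2 hub.le) hv.2).trans_eq hXb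

/-- under hypothesis (H), for every matching point `c ∈ (a,b)` and every
pair of meshes there exists a scheme pair `(ũ, x̃)` additionally satisfying
`0 < ũ < u_b`, `ũ' > 0`, `ũ'' ≥ 0` on `(a,c]`, and `c < x̃`, `x̃' > 0`, `x̃'' ≤ 0`
on `(ũ(c), u_b]`, with `x̃ < b` on `(ũ(c), u_b)`. -/
theorem scheme_pair_exists
    (a b ub : ℝ) (hab : a < b) (hub : 0 < ub)
    (N : ℝ → ℝ → ℝ) (hN : ContDiff ℝ 2 (Function.uncurry N))
    (hH : HypH N a b) :
    ∀ c ∈ Ioo a b, ∀ ms mi : Mesh,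
      ms.pt 0 = a → ms.pt ms.n = c → mi.pt 0 = 0 → mi.pt mi.n = ub →
      ∃ u u' X X' : ℝ → ℝ,
        GoodPair N a b c ub ms mi u u' X X' ∧
        ∀ v ∈ Ioo (u c) ub, X v < b :=
  fun _ hc _ _ => scheme_pair_exists_general (hN.of_le one_le_two) hH.firstOrderHypH hc.2
end
end
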